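/- arXiv:1403.6399 — 2 statements merged into one kernel-verified Lean document; each statement's English description precedes it below -/
import Mathlib

section
/- Suppose K with defining polynomials g₁,…,g_l satisfies Putinar's property. Let L : ℝ[x₁,…,xₙ] → ℝ be a linear functional such that L(p²) ≥ 0 and L(g_j p²) ≥ 0 for every polynomial p ∈ ℝ[x₁,…,xₙ] and every j = 1,…,l. Then there exists a finite Borel measure μ on ℝⁿ whose support is contained in K such that L(f) = ∫ f dμ for every polynomial f ∈ ℝ[x₁,…,xₙ]. -/
open MeasureTheory MvPolynomial

/-- `K = {x : gⱼ(x) ≥ 0, j = 1,…,l}`, with the defining polynomials `g`, satisfies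
Putinar's property if there are SOS polynomials `σ₀, σ₁, …, σ_l` such that
`{x : σ₀(x) + Σⱼ σⱼ(x) gⱼ(x) ≥ 0}` is compact. -/
def PutinarProperty {n l : ℕ} (g : Fin l → MvPolynomial (Fin n) ℝ) : Prop :=
  ∃ σ₀ : MvPolynomial (Fin n) ℝ, ∃ σ : Fin l → MvPolynomial (Fin n) ℝ,
    IsSumSq σ₀ ∧ (∀ j, IsSumSq (σ j)) ∧
    IsCompact {x : Fin n → ℝ | 0 ≤ eval x (σ₀ + ∑ j, σ j * g j)}

/-- The support of a Borel measure `μ` on `ℝⁿ`: the smallest closed set whose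
complement has `μ`-measure zero. -/
def measureSupport {n : ℕ} (μ : Measure (Fin n → ℝ)) : Set (Fin n → ℝ) :=
  ⋂₀ {C : Set (Fin n → ℝ) | IsClosed C ∧ μ Cᶜ = 0}

set_option linter.unusedSectionVars false


section RealClosed

/-- Intermediate value property for polynomials over an ordered field. -/
def PolyIVT (F : Type*) [Field F] [LinearOrder F] : Prop :=
  ∀ (p : Polynomial F) (a b : F), a < b → p.eval a * p.eval b < 0 →
    ∃ c, a < c ∧ c < b ∧ p.eval c = 0

section ivt
variable {F : Type*} [Field F] [LinearOrder F] [IsStrictOrderedRing F]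

theorem PolyIVT.sign_eq (hF : PolyIVT F) (p : Polynomial F) (a b : F)
    (h : ∀ c, a ≤ c → c ≤ b → p.eval c ≠ 0) (hab : a ≤ b) : 0 < p.eval a * p.eval b := by
  rcases hab.eq_or_lt with rfl | hab'
  · exact mul_self_pos.2 (h a le_rfl le_rfl)
  rcases lt_trichotomy (p.eval a * p.eval b) 0 with h1 | h1 | h1
  · obtain ⟨c, h2, h3, h4⟩ := hF p a b hab' h1
    exact absurd h4 (h c h2.le h3.le)
  · rcases mul_eq_zero.1 h1 with h2 | h2
    · exact absurd h2 (h a le_rfl hab)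
    · exact absurd h2 (h b hab le_rfl)
  · exact h1

theorem PolyIVT.rolle_aux (hF : PolyIVT F) (p : Polynomial F) (hp : p ≠ 0) (a b : F) (hab : a < b)
    (ha : p.eval a = 0) (hb : p.eval b = 0) (hc : ∀ c, a < c → c < b → p.eval c ≠ 0) :
    ∃ c, a < c ∧ c < b ∧ p.derivative.eval c = 0 := by
  obtain ⟨q, hq, hqa⟩ := Polynomial.exists_eq_pow_rootMultiplicity_mul_and_not_dvd p hp a
  have hq0 : q ≠ 0 := by rintro rfl; simp at hqa
  obtain ⟨g, hg, hgb⟩ := Polynomial.exists_eq_pow_rootMultiplicity_mul_and_not_dvd q hq0 b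
  rw [Polynomial.dvd_iff_isRoot, Polynomial.IsRoot] at hqa hgb
  have hm : 0 < p.rootMultiplicity a := (Polynomial.rootMultiplicity_pos hp).2 ha
  have hqb : q.eval b = 0 := by
    rw [hq] at hb
    simp only [Polynomial.eval_mul, Polynomial.eval_pow, Polynomial.eval_sub, Polynomial.eval_X,
      Polynomial.eval_C] at hb
    rcases mul_eq_zero.1 hb with h | h
    · exact absurd (pow_eq_zero_iff (by omega) |>.1 h) (sub_pos.2 hab).ne'
    · exact h
  have hn : 0 < q.rootMultiplicity b := (Polynomial.rootMultiplicity_pos hq0).2 hqb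
  generalize p.rootMultiplicity a = m at *
  generalize q.rootMultiplicity b = n at *
  obtain ⟨m, rfl⟩ : ∃ k, m = k + 1 := ⟨m - 1, by omega⟩
  obtain ⟨n, rfl⟩ : ∃ k, n = k + 1 := ⟨n - 1, by omega⟩
  have hga : g.eval a ≠ 0 := by
    intro h; apply hqa; rw [hg]; simp [h]
  have hgne : ∀ c, a ≤ c → c ≤ b → g.eval c ≠ 0 := by
    intro c h1 h2 h3
    rcases h1.eq_or_lt with rfl | h1
    · exact hga h3
    rcases h2.eq_or_lt with rfl | h2
    · exact hgb h3
    exact hc c h1 h2 (by rw [hq, hg]; simp [h3])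
  have hs := hF.sign_eq g a b hgne hab.le
  let r : Polynomial F := Polynomial.C ((m : F) + 1) * (Polynomial.X - Polynomial.C b) * g +
    Polynomial.C ((n : F) + 1) * (Polynomial.X - Polynomial.C a) * g +
    (Polynomial.X - Polynomial.C a) * (Polynomial.X - Polynomial.C b) * g.derivative
  have hd : p.derivative = (Polynomial.X - Polynomial.C a) ^ m *
      (Polynomial.X - Polynomial.C b) ^ n * r := by
    rw [hq, hg]
    simp only [Polynomial.derivative_mul, Polynomial.derivative_X_sub_C_pow, r,
      Polynomial.C_add, Polynomial.C_1, map_natCast]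
    push_cast
    try simp only [Nat.add_sub_cancel]
    ring
  have hra : r.eval a = ((m : F) + 1) * (a - b) * g.eval a := by simp [r]
  have hrb : r.eval b = ((n : F) + 1) * (b - a) * g.eval b := by simp [r]
  have hlt : r.eval a * r.eval b < 0 := by
    rw [hra, hrb]
    have h1 : (0 : F) < ((m : F) + 1) * ((n : F) + 1) * ((b - a) * (b - a)) * (g.eval a * g.eval b) := by
      have : 0 < b - a := sub_pos.2 hab
      positivity
    linarith
  obtain ⟨c, h1, h2, h3⟩ := hF r a b hab hlt
  exact ⟨c, h1, h2, by rw [hd]; simp [h3]⟩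

theorem PolyIVT.rolle (hF : PolyIVT F) (p : Polynomial F) (a b : F) (hab : a < b)
    (ha : p.eval a = 0) (hb : p.eval b = 0) :
    ∃ c, a < c ∧ c < b ∧ p.derivative.eval c = 0 := by
  classical
  by_cases hp : p = 0
  · obtain ⟨c, h1, h2⟩ := exists_between hab
    exact ⟨c, h1, h2, by simp [hp]⟩
  let S := p.roots.toFinset.filter (fun c => a < c ∧ c ≤ b)
  have hS : S.Nonempty := ⟨b, by simp [S, hp, hb, hab]⟩
  have hmem := S.min'_mem hS
  set d := S.min' hS with hd
  simp only [S, Finset.mem_filter, Multiset.mem_toFinset, Polynomial.mem_roots hp,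
    Polynomial.IsRoot] at hmem
  obtain ⟨c, h1, h2, h3⟩ := hF.rolle_aux p hp a d hmem.2.1 ha hmem.1 (by
    intro c h1 h2 h3
    have : c ∈ S := by
      simp only [S, Finset.mem_filter, Multiset.mem_toFinset, Polynomial.mem_roots hp,
        Polynomial.IsRoot]
      exact ⟨h3, h1, h2.le.trans hmem.2.2⟩
    exact absurd (S.min'_le c this) (not_le.2 h2))
  exact ⟨c, h1, h2.trans_le hmem.2.2, h3⟩

theorem PolyIVT.ivt_value (hF : PolyIVT F) (p : Polynomial F) (a b v : F) (hab : a < b)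
    (h : (p.eval a - v) * (p.eval b - v) < 0) : ∃ c, a < c ∧ c < b ∧ p.eval c = v := by
  obtain ⟨c, h1, h2, h3⟩ := hF (p - Polynomial.C v) a b hab (by simpa using h)
  exact ⟨c, h1, h2, by simpa [sub_eq_zero] using h3⟩

/-- If `p'` has no zeros in `(a,b)` and `p y = 0` then `p` changes sign at `y`. -/
theorem PolyIVT.cross (hF : PolyIVT F) (p : Polynomial F) (a b : F)
    (hd : ∀ c, a < c → c < b → p.derivative.eval c ≠ 0) (x y z : F) (hax : a ≤ x) (hxy : x < y)
    (hyz : y < z) (hzb : z ≤ b) (hy : p.eval y = 0) : p.eval x * p.eval z < 0 := by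
  have inj : ∀ s t, a ≤ s → s < t → t ≤ b → p.eval s ≠ p.eval t := by
    intro s t h1 h2 h3 h4
    obtain ⟨c, h5, h6, h7⟩ := hF.rolle (p - Polynomial.C (p.eval t)) s t h2 (by simp [h4]) (by simp)
    exact hd c (h1.trans_lt h5) (h6.trans_le h3) (by simpa using h7)
  have hx : p.eval x ≠ 0 := hy ▸ inj x y hax hxy (hyz.le.trans hzb)
  have hz : p.eval z ≠ 0 := hy ▸ (inj y z (hax.trans hxy.le) hyz hzb).symm
  by_contra hcon
  have key : ∃ v, v ≠ 0 ∧ (p.eval x - v) * (0 - v) < 0 ∧ (0 - v) * (p.eval z - v) < 0 := by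
    rcases lt_or_gt_of_ne hx with h1 | h1 <;> rcases lt_or_gt_of_ne hz with h2 | h2
    · refine ⟨max (p.eval x) (p.eval z) / 2, ?_, ?_, ?_⟩
      · have : max (p.eval x) (p.eval z) < 0 := max_lt h1 h2
        linarith
      · have : max (p.eval x) (p.eval z) < 0 := max_lt h1 h2
        have h3 := le_max_left (p.eval x) (p.eval z)
        apply mul_neg_of_neg_of_pos <;> linarith
      · have : max (p.eval x) (p.eval z) < 0 := max_lt h1 h2
        have h3 := le_max_right (p.eval x) (p.eval z)
        apply mul_neg_of_pos_of_neg <;> linarith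
    · exact absurd (mul_neg_of_neg_of_pos h1 h2) hcon
    · exact absurd (mul_neg_of_pos_of_neg h1 h2) hcon
    · refine ⟨min (p.eval x) (p.eval z) / 2, ?_, ?_, ?_⟩
      · have : 0 < min (p.eval x) (p.eval z) := lt_min h1 h2
        linarith
      · have : 0 < min (p.eval x) (p.eval z) := lt_min h1 h2
        have h3 := min_le_left (p.eval x) (p.eval z)
        apply mul_neg_of_pos_of_neg <;> linarith
      · have : 0 < min (p.eval x) (p.eval z) := lt_min h1 h2
        have h3 := min_le_right (p.eval x) (p.eval z)
        apply mul_neg_of_neg_of_pos <;> linarith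
  obtain ⟨v, -, h1, h2⟩ := key
  obtain ⟨c, h3, h4, h5⟩ := hF.ivt_value p x y v hxy (by rwa [hy])
  obtain ⟨d, h6, h7, h8⟩ := hF.ivt_value p y z v hyz (by rwa [hy])
  exact inj c d (hax.trans h3.le) (h4.trans h6) (h7.le.trans hzb) (h5.trans h8.symm)

/-- Cauchy bound. -/
theorem root_lt_bound (p : Polynomial F) (hp : p.Monic) (x : F) (hx : p.eval x = 0) :
    |x| < 1 + ∑ i ∈ Finset.range p.natDegree, ((p.coeff i) ^ 2 + 1) := by
  have hS : 0 ≤ ∑ i ∈ Finset.range p.natDegree, ((p.coeff i) ^ 2 + 1) :=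
    Finset.sum_nonneg fun i _ => by positivity
  by_contra hcon
  push Not at hcon
  have h1 : 1 ≤ |x| := by linarith
  have hd : 0 < p.natDegree := by
    rcases Nat.eq_zero_or_pos p.natDegree with h | h
    · rw [hp.natDegree_eq_zero.1 h] at hx; simp at hx
    · exact h
  obtain ⟨d, hd'⟩ : ∃ d, p.natDegree = d + 1 := ⟨p.natDegree - 1, by omega⟩
  rw [Polynomial.eval_eq_sum_range, Finset.sum_range_succ, hp.coeff_natDegree, one_mul] at hx
  have h2 : |x| ^ p.natDegree ≤ (∑ i ∈ Finset.range p.natDegree, ((p.coeff i) ^ 2 + 1)) * |x| ^ d := by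
    rw [← abs_pow, show x ^ p.natDegree = -(∑ i ∈ Finset.range p.natDegree, p.coeff i * x ^ i) by
      linarith, abs_neg, Finset.sum_mul]
    refine (Finset.abs_sum_le_sum_abs _ _).trans (Finset.sum_le_sum fun i hi => ?_)
    rw [abs_mul, abs_pow]
    have : i ≤ d := by have := Finset.mem_range.1 hi; omega
    apply mul_le_mul _ (pow_le_pow_right₀ h1 this) (by positivity) (by positivity)
    rw [abs_le]; constructor <;> nlinarith [sq_nonneg (p.coeff i + 1), sq_nonneg (p.coeff i - 1)]
  rw [hd', pow_succ, mul_comm] at h2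
  have h3 := le_of_mul_le_mul_right h2 (by positivity)
  rw [hd'] at hcon
  linarith
end ivt
end RealClosed

section Transfer
variable {K F₁ F₂ : Type} [Field K] [LinearOrder K] [IsStrictOrderedRing K]
  [Field F₁] [LinearOrder F₁] [IsStrictOrderedRing F₁]
  [Field F₂] [LinearOrder F₂] [IsStrictOrderedRing F₂]

/-- Roots of polynomials of degree `< d` over `K` lie in `K`. -/
def RootsIn (i : K →+* F₁) (d : ℕ) : Prop :=
  ∀ h : Polynomial K, h ≠ 0 → h.natDegree < d → ∀ x, (h.map i).eval x = 0 → ∃ c, i c = x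

theorem sign_hom (i : K →+* F₁) (hi : StrictMono i) (c : K) :
    SignType.sign (i c) = SignType.sign c := by
  rcases lt_trichotomy c 0 with h | h | h
  · rw [sign_neg h, sign_neg (by simpa using hi h)]
  · simp [h]
  · rw [sign_pos h, sign_pos (by simpa using hi h)]

theorem sign_eq_of_mul_pos {F : Type} [Field F] [LinearOrder F] [IsStrictOrderedRing F] {a b : F}
    (h : 0 < a * b) : SignType.sign a = SignType.sign b := by
  rcases mul_pos_iff.1 h with ⟨h1, h2⟩ | ⟨h1, h2⟩
  · rw [sign_pos h1, sign_pos h2]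
  · rw [sign_neg h1, sign_neg h2]

theorem sign_of_noroot (hF : PolyIVT F₁) (i : K →+* F₁) (hi : StrictMono i) (h : Polynomial K)
    (hn : ∀ x, (h.map i).eval x ≠ 0) (x : F₁) :
    SignType.sign ((h.map i).eval x) = SignType.sign (h.eval 0) := by
  have e : (h.map i).eval 0 = i (h.eval 0) := by
    rw [← map_zero i, Polynomial.eval_map_apply]
  rw [← sign_hom i hi, ← e]
  rcases le_total x 0 with hx | hx
  · exact sign_eq_of_mul_pos (hF.sign_eq _ _ _ (fun c _ _ => hn c) hx)
  · exact (sign_eq_of_mul_pos (hF.sign_eq _ _ _ (fun c _ _ => hn c) hx)).symm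

theorem sign_transfer (h₁ : PolyIVT F₁) (h₂ : PolyIVT F₂) (i₁ : K →+* F₁) (i₂ : K →+* F₂)
    (hi₁ : StrictMono i₁) (hi₂ : StrictMono i₂) (d : ℕ) (r₁ : RootsIn i₁ d) (r₂ : RootsIn i₂ d)
    (α : F₁) (β : F₂) (cut : ∀ c, SignType.sign (α - i₁ c) = SignType.sign (β - i₂ c))
    (n : ℕ) : ∀ h : Polynomial K, h.natDegree < d → h.natDegree ≤ n →
      SignType.sign ((h.map i₁).eval α) = SignType.sign ((h.map i₂).eval β) := by
  induction n with
  | zero =>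
    intro h _ hn
    rw [Polynomial.eq_C_of_natDegree_le_zero hn]
    simp [sign_hom i₁ hi₁, sign_hom i₂ hi₂]
  | succ n ih =>
    intro h hd hn
    by_cases h0 : h = 0
    · simp [h0]
    have red : (∃ c, h.eval c = 0) →
        SignType.sign ((h.map i₁).eval α) = SignType.sign ((h.map i₂).eval β) := by
      rintro ⟨c, hc⟩
      obtain ⟨q, rfl⟩ := Polynomial.dvd_iff_isRoot.2 hc
      have hq : q ≠ 0 := by rintro rfl; simp at h0
      have hdeg : ((Polynomial.X - Polynomial.C c) * q).natDegree = 1 + q.natDegree := by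
        rw [Polynomial.natDegree_mul (Polynomial.X_sub_C_ne_zero c) hq, Polynomial.natDegree_X_sub_C]
      have := ih q (by omega) (by omega)
      simp only [Polynomial.map_mul, Polynomial.eval_mul, sign_mul, this]
      simp [cut c]
    by_cases e1 : ∃ x, (h.map i₁).eval x = 0
    · obtain ⟨x, hx⟩ := e1
      obtain ⟨c, rfl⟩ := r₁ h h0 hd x hx
      exact red ⟨c, by simpa [Polynomial.eval_map_apply] using hx⟩
    by_cases e2 : ∃ x, (h.map i₂).eval x = 0
    · obtain ⟨x, hx⟩ := e2
      obtain ⟨c, rfl⟩ := r₂ h h0 hd x hx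
      exact red ⟨c, by simpa [Polynomial.eval_map_apply] using hx⟩
    push Not at e1 e2
    rw [sign_of_noroot h₁ i₁ hi₁ h e1, sign_of_noroot h₂ i₂ hi₂ h e2]

theorem alg_step (h₁ : PolyIVT F₁) (h₂ : PolyIVT F₂) (i₁ : K →+* F₁) (i₂ : K →+* F₂)
    (hi₁ : StrictMono i₁) (hi₂ : StrictMono i₂) (f : Polynomial K) (hf : f.Monic)
    (r₁ : RootsIn i₁ f.natDegree) (r₂ : RootsIn i₂ f.natDegree)
    (α : F₁) (hα : (f.map i₁).eval α = 0) (hαK : ∀ c, i₁ c ≠ α) :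
    ∃ β : F₂, (f.map i₂).eval β = 0 ∧
      ∀ c, SignType.sign (α - i₁ c) = SignType.sign (β - i₂ c) := by
  classical
  have hd : 0 < f.natDegree := by
    rcases Nat.eq_zero_or_pos f.natDegree with h | h
    · rw [hf.natDegree_eq_zero.1 h] at hα; simp at hα
    · exact h
  have hf' : f.derivative ≠ 0 := fun h =>
    hd.ne' (Polynomial.natDegree_eq_zero_of_derivative_eq_zero h)
  have hdeg : f.derivative.natDegree < f.natDegree := Polynomial.natDegree_derivative_lt hd.ne'
  set M : K := 1 + ∑ i ∈ Finset.range f.natDegree, ((f.coeff i) ^ 2 + 1) with hM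
  have hb := root_lt_bound (f.map i₁) (hf.map i₁) α hα
  have hMi : i₁ M = 1 + ∑ i ∈ Finset.range (f.map i₁).natDegree, (((f.map i₁).coeff i) ^ 2 + 1) := by
    simp [hM]
  rw [← hMi, abs_lt] at hb
  let Z : Finset K := insert M (insert (-M) f.derivative.roots.toFinset)
  let A := Z.filter (fun c => i₁ c < α)
  let B := Z.filter (fun c => α < i₁ c)
  have hA : A.Nonempty := ⟨-M, by simp [A, Z, hb.1]⟩
  have hB : B.Nonempty := ⟨M, by simp [B, Z, hb.2]⟩
  obtain ⟨a, ha, hamax⟩ : ∃ a ∈ A, ∀ c ∈ A, c ≤ a := ⟨A.max' hA, A.max'_mem hA, fun c hc => A.le_max' c hc⟩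
  obtain ⟨b, hbm, hbmin⟩ : ∃ a ∈ B, ∀ c ∈ B, a ≤ c := ⟨B.min' hB, B.min'_mem hB, fun c hc => B.min'_le c hc⟩
  have haα : i₁ a < α := (Finset.mem_filter.1 ha).2
  have hbα : α < i₁ b := (Finset.mem_filter.1 hbm).2
  have hab : a < b := hi₁.lt_iff_lt.1 (haα.trans hbα)
  have noK : ∀ c, a < c → c < b → f.derivative.eval c ≠ 0 := by
    intro c h1 h2 h3
    have hcZ : c ∈ Z := by simp [Z, hf', h3]
    rcases lt_or_gt_of_ne (hαK c) with h | h
    · exact absurd (hamax c (Finset.mem_filter.2 ⟨hcZ, h⟩)) (not_le.2 h1)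
    · exact absurd (hbmin c (Finset.mem_filter.2 ⟨hcZ, h⟩)) (not_le.2 h2)
  have no1 : ∀ x, i₁ a < x → x < i₁ b → (f.map i₁).derivative.eval x ≠ 0 := by
    intro x h1 h2 h3
    rw [Polynomial.derivative_map] at h3
    obtain ⟨c, rfl⟩ := r₁ _ hf' hdeg x h3
    exact noK c (hi₁.lt_iff_lt.1 h1) (hi₁.lt_iff_lt.1 h2)
      (by simpa [Polynomial.eval_map_apply] using h3)
  have no2 : ∀ x, i₂ a < x → x < i₂ b → (f.map i₂).derivative.eval x ≠ 0 := by
    intro x h1 h2 h3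
    rw [Polynomial.derivative_map] at h3
    obtain ⟨c, rfl⟩ := r₂ _ hf' hdeg x h3
    exact noK c (hi₂.lt_iff_lt.1 h1) (hi₂.lt_iff_lt.1 h2)
      (by simpa [Polynomial.eval_map_apply] using h3)
  have down1 : ∀ c e, (f.map i₁).eval (i₁ c) * (f.map i₁).eval (i₁ e) < 0 → f.eval c * f.eval e < 0 := by
    intro c e h
    rw [Polynomial.eval_map_apply, Polynomial.eval_map_apply, ← map_mul, ← map_zero i₁] at h
    exact hi₁.lt_iff_lt.1 h
  have down2 : ∀ c e, (f.map i₂).eval (i₂ c) * (f.map i₂).eval (i₂ e) < 0 → f.eval c * f.eval e < 0 := by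
    intro c e h
    rw [Polynomial.eval_map_apply, Polynomial.eval_map_apply, ← map_mul, ← map_zero i₂] at h
    exact hi₂.lt_iff_lt.1 h
  have hsab : f.eval a * f.eval b < 0 := down1 _ _
    (h₁.cross (f.map i₁) _ _ no1 _ α _ le_rfl haα hbα le_rfl hα)
  obtain ⟨β, hβ1, hβ2, hβ⟩ := h₂ (f.map i₂) (i₂ a) (i₂ b) (hi₂ hab) (by
    rw [Polynomial.eval_map_apply, Polynomial.eval_map_apply, ← map_mul, ← map_zero i₂]
    exact hi₂ hsab)
  refine ⟨β, hβ, fun c => ?_⟩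
  rcases lt_or_gt_of_ne (hαK c) with h | h
  · rw [sign_pos (sub_pos.2 h), sign_pos]
    rw [sub_pos]
    rcases le_or_gt c a with hca | hca
    · exact (hi₂.monotone hca).trans_lt hβ1
    have h3 : f.eval c * f.eval b < 0 := down1 _ _
      (h₁.cross (f.map i₁) _ _ no1 _ α _ (hi₁ hca).le h hbα le_rfl hα)
    by_contra hcon
    push Not at hcon
    rcases hcon.eq_or_lt with h4 | h4
    · rw [h4, Polynomial.eval_map_apply, map_eq_zero] at hβ
      simp [hβ] at h3
    · have hcb : c < b := hi₁.lt_iff_lt.1 (h.trans hbα)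
      have h5 : f.eval a * f.eval c < 0 := down2 _ _
        (h₂.cross (f.map i₂) _ _ no2 _ β _ le_rfl hβ1 h4 (hi₂ hcb).le hβ)
      nlinarith [mul_pos_of_neg_of_neg h3 h5, sq_nonneg (f.eval c), mul_nonneg (neg_nonneg.2 hsab.le) (sq_nonneg (f.eval c))]
  · rw [sign_neg (sub_neg.2 h), sign_neg]
    rw [sub_neg]
    rcases le_or_gt b c with hca | hca
    · exact hβ2.trans_le (hi₂.monotone hca)
    have h3 : f.eval a * f.eval c < 0 := down1 _ _
      (h₁.cross (f.map i₁) _ _ no1 _ α _ le_rfl haα h (hi₁ hca).le hα)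
    by_contra hcon
    push Not at hcon
    rcases hcon.eq_or_lt with h4 | h4
    · rw [← h4, Polynomial.eval_map_apply, map_eq_zero] at hβ
      simp [hβ] at h3
    · have hcb : a < c := hi₁.lt_iff_lt.1 (haα.trans h)
      have h5 : f.eval c * f.eval b < 0 := down2 _ _
        (h₂.cross (f.map i₂) _ _ no2 _ β _ (hi₂ hcb).le h4 hβ2 le_rfl hβ)
      nlinarith [mul_pos_of_neg_of_neg h3 h5, sq_nonneg (f.eval c), mul_nonneg (neg_nonneg.2 hsab.le) (sq_nonneg (f.eval c))]

theorem alg_step' (h₁ : PolyIVT F₁) (h₂ : PolyIVT F₂) (i₁ : K →+* F₁) (i₂ : K →+* F₂)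
    (hi₁ : StrictMono i₁) (hi₂ : StrictMono i₂) (f : Polynomial K) (hf : f ≠ 0)
    (r₁ : RootsIn i₁ f.natDegree) (r₂ : RootsIn i₂ f.natDegree)
    (α : F₁) (hα : (f.map i₁).eval α = 0) (hαK : ∀ c, i₁ c ≠ α) :
    ∃ β : F₂, ∀ h : Polynomial K,
      SignType.sign ((h.map i₁).eval α) = SignType.sign ((h.map i₂).eval β) := by
  have hlc : f.leadingCoeff⁻¹ ≠ 0 := by simpa using hf
  set g := f * Polynomial.C f.leadingCoeff⁻¹ with hg
  have hgm : g.Monic := Polynomial.monic_mul_leadingCoeff_inv hf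
  have hgd : g.natDegree = f.natDegree := Polynomial.natDegree_mul_C hlc
  have hgα : (g.map i₁).eval α = 0 := by simp [hg, hα]
  rw [← hgd] at r₁ r₂
  have hd : 0 < g.natDegree := by
    rcases Nat.eq_zero_or_pos g.natDegree with h | h
    · rw [hgm.natDegree_eq_zero.1 h] at hgα; simp at hgα
    · exact h
  obtain ⟨β, hβ, cut⟩ := alg_step h₁ h₂ i₁ i₂ hi₁ hi₂ g hgm r₁ r₂ α hgα hαK
  refine ⟨β, fun h => ?_⟩
  have := sign_transfer h₁ h₂ i₁ i₂ hi₁ hi₂ _ r₁ r₂ α β cut _ (h %ₘ g)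
    (Polynomial.natDegree_modByMonic_lt h hgm (by intro h; simp [h] at hd)) le_rfl
  have e := Polynomial.modByMonic_add_div h g
  rw [← e]
  simpa [hgα, hβ] using this
end Transfer

section Span
variable {F₁ F₂ : Type}
  [Field F₁] [LinearOrder F₁] [IsStrictOrderedRing F₁]
  [Field F₂] [LinearOrder F₂] [IsStrictOrderedRing F₂]

/-- A correspondence between subrings of two ordered fields preserving signs. -/
def GoodSpan (G : Subring (F₁ × F₂)) : Prop :=
  ∀ x ∈ G, SignType.sign x.1 = SignType.sign x.2

theorem GoodSpan.zero_iff {G : Subring (F₁ × F₂)} (hG : GoodSpan G) {x} (hx : x ∈ G) :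
    x.1 = 0 ↔ x.2 = 0 := by
  rw [← sign_eq_zero_iff, hG x hx, sign_eq_zero_iff]

theorem GoodSpan.exists_max (G₀ : Subring (F₁ × F₂)) (h : GoodSpan G₀) :
    ∃ G, G₀ ≤ G ∧ GoodSpan G ∧ ∀ G', GoodSpan G' → G ≤ G' → G' ≤ G := by
  obtain ⟨G, h1, h2⟩ := zorn_le_nonempty₀ {G : Subring (F₁ × F₂) | GoodSpan G} (by
    intro c hc hch y hy
    refine ⟨sSup c, ?_, fun z hz => le_sSup hz⟩
    intro x hx
    rw [Subring.mem_sSup_of_directedOn ⟨y, hy⟩ hch.directedOn] at hx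
    obtain ⟨s, hs, hxs⟩ := hx
    exact hc hs x hxs) G₀ h
  exact ⟨G, h1, h2.1, fun G' h3 h4 => h2.2 h3 h4⟩

/-- Localization of a span. -/
def spanLoc (G : Subring (F₁ × F₂)) : Subring (F₁ × F₂) where
  carrier := {y | ∃ s ∈ G, s.1 ≠ 0 ∧ s.2 ≠ 0 ∧ y * s ∈ G}
  mul_mem' := by
    rintro y y' ⟨s, hs, h1, h2, h3⟩ ⟨s', hs', h1', h2', h3'⟩
    exact ⟨s * s', mul_mem hs hs', mul_ne_zero h1 h1', mul_ne_zero h2 h2', by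
      rw [mul_mul_mul_comm]; exact mul_mem h3 h3'⟩
  one_mem' := ⟨1, one_mem _, by simp, by simp, by simp⟩
  add_mem' := by
    rintro y y' ⟨s, hs, h1, h2, h3⟩ ⟨s', hs', h1', h2', h3'⟩
    refine ⟨s * s', mul_mem hs hs', mul_ne_zero h1 h1', mul_ne_zero h2 h2', ?_⟩
    have : (y + y') * (s * s') = (y * s) * s' + (y' * s') * s := by ring
    rw [this]
    exact add_mem (mul_mem h3 hs') (mul_mem h3' hs)
  zero_mem' := ⟨1, one_mem _, by simp, by simp, by simp⟩
  neg_mem' := by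
    rintro y ⟨s, hs, h1, h2, h3⟩
    exact ⟨s, hs, h1, h2, by rw [neg_mul]; exact neg_mem h3⟩

theorem spanLoc_good {G : Subring (F₁ × F₂)} (h : GoodSpan G) : GoodSpan (spanLoc G) := by
  rintro y ⟨s, hs, h1, h2, h3⟩
  have e1 := h s hs
  have e2 := h _ h3
  simp only [Prod.fst_mul, Prod.snd_mul, sign_mul, e1] at e2
  exact mul_right_cancel₀ (by simpa [sign_eq_zero_iff] using h2) e2

theorem max_inv {G : Subring (F₁ × F₂)} (h : GoodSpan G)
    (hmax : ∀ G', GoodSpan G' → G ≤ G' → G' ≤ G) {x} (hx : x ∈ G) (h1 : x.1 ≠ 0) :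
    (x.1⁻¹, x.2⁻¹) ∈ G := by
  have h2 : x.2 ≠ 0 := fun e => h1 ((h.zero_iff hx).2 e)
  apply hmax (spanLoc G) (spanLoc_good h)
  · intro y hy
    exact ⟨1, one_mem _, by simp, by simp, by simpa using hy⟩
  · refine ⟨x, hx, h1, h2, ?_⟩
    have : ((x.1⁻¹, x.2⁻¹) : F₁ × F₂) * x = 1 := by
      ext <;> simp [h1, h2]
    rw [this]; exact one_mem _

theorem field_of_homs (R : Type) [CommRing R] (hfield : IsField R) (a : R →+* F₁) (b : R →+* F₂)
    (ha : Function.Injective a) (hs : ∀ x, SignType.sign (a x) = SignType.sign (b x)) :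
    ∃ (K : Type) (_ : Field K) (_ : LinearOrder K) (_ : IsStrictOrderedRing K)
      (j₁ : K →+* F₁) (j₂ : K →+* F₂), StrictMono j₁ ∧ StrictMono j₂ ∧
      ∀ x, (∃ c, (a c, b c) = x) ↔ ∃ c, (j₁ c, j₂ c) = x := by
  let : Field R := hfield.toField
  let : LinearOrder R := LinearOrder.lift' a ha
  have : IsStrictOrderedRing R := by
    refine Function.Injective.isStrictOrderedRing a
      (map_zero _) (map_one _) (map_add _) (map_mul _) ?_ ?_
    · intro x y; exact Iff.rfl
    · intro x y; exact Iff.rfl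
  refine ⟨R, inferInstance, inferInstance, inferInstance, a, b, fun x y hab => hab,
    fun x y hab => ?_, fun x => Iff.rfl⟩
  have h1 := hs (y - x)
  have h2 : a x < a y := hab
  rw [map_sub, sign_pos (sub_pos.2 h2), eq_comm, sign_eq_one_iff, map_sub] at h1
  exact sub_pos.1 h1

theorem max_field {G : Subring (F₁ × F₂)} (h : GoodSpan G)
    (hmax : ∀ G', GoodSpan G' → G ≤ G' → G' ≤ G) :
    ∃ (K : Type) (_ : Field K) (_ : LinearOrder K) (_ : IsStrictOrderedRing K)
      (j₁ : K →+* F₁) (j₂ : K →+* F₂), StrictMono j₁ ∧ StrictMono j₂ ∧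
      ∀ x, x ∈ G ↔ ∃ c, (j₁ c, j₂ c) = x := by
  have hinj : Function.Injective ((RingHom.fst F₁ F₂).comp G.subtype) := by
    rw [injective_iff_map_eq_zero]
    intro a ha
    have ha1 : (a : F₁ × F₂).1 = 0 := ha
    ext
    · exact ha1
    · exact (h.zero_iff a.2).1 ha1
  have hfield : IsField G := by
    refine ⟨⟨0, 1, zero_ne_one⟩, mul_comm, fun {a} ha => ?_⟩
    have ha1 : (a : F₁ × F₂).1 ≠ 0 := fun e => ha (hinj (by simpa using e))
    have ha2 : (a : F₁ × F₂).2 ≠ 0 := fun e => ha1 ((h.zero_iff a.2).2 e)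
    refine ⟨⟨_, max_inv h hmax a.2 ha1⟩, ?_⟩
    ext <;> simp [ha1, ha2]
  obtain ⟨K, i1, i2, i3, j₁, j₂, m₁, m₂, hK⟩ := field_of_homs G hfield
    ((RingHom.fst F₁ F₂).comp G.subtype) ((RingHom.snd F₁ F₂).comp G.subtype) hinj
    (fun x => h _ x.2)
  refine ⟨K, i1, i2, i3, j₁, j₂, m₁, m₂, fun x => ?_⟩
  rw [← hK]
  constructor
  · intro hx; exact ⟨⟨x, hx⟩, rfl⟩
  · rintro ⟨c, rfl⟩; exact c.2

theorem span_closure (h₁ : PolyIVT F₁) (h₂ : PolyIVT F₂) (G₀ : Subring (F₁ × F₂))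
    (hG₀ : GoodSpan G₀) :
    ∃ (K : Type) (_ : Field K) (_ : LinearOrder K) (_ : IsStrictOrderedRing K)
      (j₁ : K →+* F₁) (j₂ : K →+* F₂), StrictMono j₁ ∧ StrictMono j₂ ∧
      (∀ x ∈ G₀, ∃ c, j₁ c = x.1 ∧ j₂ c = x.2) ∧ (∀ d, RootsIn j₁ d) ∧ ∀ d, RootsIn j₂ d := by
  obtain ⟨G, hle, hG, hmax⟩ := GoodSpan.exists_max G₀ hG₀
  obtain ⟨K, _, _, _, j₁, j₂, m₁, m₂, hK⟩ := max_field hG hmax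
  have add : ∀ (α : F₁) (β : F₂), (∀ h : Polynomial K,
      SignType.sign ((h.map j₁).eval α) = SignType.sign ((h.map j₂).eval β)) →
      ∃ c, j₁ c = α ∧ j₂ c = β := by
    intro α β hs
    let φ : Polynomial K →+* F₁ × F₂ :=
      (Polynomial.eval₂RingHom j₁ α).prod (Polynomial.eval₂RingHom j₂ β)
    have hφ : GoodSpan φ.range := by
      rintro _ ⟨p, rfl⟩
      simpa [φ, Polynomial.eval_map] using hs p
    have : (α, β) ∈ G := hmax φ.range hφ (by
      intro x hx
      obtain ⟨c, rfl⟩ := (hK x).1 hx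
      exact ⟨Polynomial.C c, by simp [φ]⟩) ⟨Polynomial.X, by simp [φ]⟩
    obtain ⟨c, hc⟩ := (hK _).1 this
    exact ⟨c, congrArg Prod.fst hc, congrArg Prod.snd hc⟩
  have main : ∀ d, RootsIn j₁ d ∧ RootsIn j₂ d := by
    intro d
    induction d with
    | zero => exact ⟨fun _ _ h => absurd h (by omega), fun _ _ h => absurd h (by omega)⟩
    | succ d ih =>
      constructor
      · intro f hf hd x hx
        by_contra hcon
        push Not at hcon
        rcases Nat.lt_succ_iff_lt_or_eq.1 hd with hd | hd
        · obtain ⟨c, hc⟩ := ih.1 f hf hd x hx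
          exact hcon c hc
        · subst hd
          obtain ⟨β, hβ⟩ := alg_step' h₁ h₂ j₁ j₂ m₁ m₂ f hf ih.1 ih.2 x hx hcon
          obtain ⟨c, hc, -⟩ := add x β hβ
          exact hcon c hc
      · intro f hf hd x hx
        by_contra hcon
        push Not at hcon
        rcases Nat.lt_succ_iff_lt_or_eq.1 hd with hd | hd
        · obtain ⟨c, hc⟩ := ih.2 f hf hd x hx
          exact hcon c hc
        · subst hd
          obtain ⟨β, hβ⟩ := alg_step' h₂ h₁ j₂ j₁ m₂ m₁ f hf ih.2 ih.1 x hx hcon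
          obtain ⟨c, -, hc⟩ := add β x (fun h => (hβ h).symm)
          exact hcon c hc
  refine ⟨K, _, _, ‹_›, j₁, j₂, m₁, m₂, fun x hx => ?_, fun d => (main d).1, fun d => (main d).2⟩
  obtain ⟨c, hc⟩ := (hK x).1 (hle hx)
  exact ⟨c, congrArg Prod.fst hc, congrArg Prod.snd hc⟩

/-- A field with the intermediate value property is algebraically closed in every such extension. -/
theorem rootsIn_of_ivt (h₁ : PolyIVT F₁) (h₂ : PolyIVT F₂) (i : F₂ →+* F₁) (hi : StrictMono i)
    (d : ℕ) : RootsIn i d := by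
  obtain ⟨K, _, _, _, j₁, j₂, m₁, m₂, hK, r₁, r₂⟩ := span_closure h₁ h₂ (i.prod (RingHom.id F₂)).range (by
    rintro _ ⟨c, rfl⟩
    simp [sign_hom i hi])
  have hK' : ∀ c : F₂, ∃ e, j₁ e = i c ∧ j₂ e = c := fun c => hK (i c, c) ⟨c, rfl⟩
  choose k hk1 hk2 using hK'
  have hkj : ∀ e, k (j₂ e) = e := fun e => j₂.injective (hk2 _)
  let kh : F₂ →+* K := (RingEquiv.ofBijective j₂ ⟨j₂.injective, fun c => ⟨k c, hk2 c⟩⟩).symm.toRingHom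
  have hkh : ∀ c, j₂ (kh c) = c := fun c =>
    (RingEquiv.ofBijective j₂ ⟨j₂.injective, fun c => ⟨k c, hk2 c⟩⟩).apply_symm_apply c
  have hij : i = j₁.comp kh := by
    ext c
    have : kh c = k c := j₂.injective ((hkh c).trans (hk2 c).symm)
    simp [this, hk1]
  intro h h0 hd x hx
  rw [hij, ← Polynomial.map_map] at hx
  obtain ⟨e, he⟩ := r₁ _ (h.map kh) (by simpa [Polynomial.map_eq_zero] using h0) (Nat.lt_succ_self _) x hx
  refine ⟨j₂ e, ?_⟩
  have := hk1 (j₂ e)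
  rw [hkj] at this
  rw [← this, he]
end Span

section Ultra

/-- Constant germs. -/
noncomputable def germConst {I : Type} (φ : Ultrafilter I) (k : Type) [Field k] :
    k →+* Filter.Germ (φ : Filter I) k where
  toFun c := ((fun _ => c : I → k) : Filter.Germ (φ : Filter I) k)
  map_one' := rfl
  map_mul' _ _ := rfl
  map_zero' := rfl
  map_add' _ _ := rfl

theorem germ_eval {I : Type} (φ : Ultrafilter I) (k : Type) [Field k]
    (p : Polynomial (Filter.Germ (φ : Filter I) k)) :
    ∃ q : I → Polynomial k, ∀ x : I → k,
      p.eval (x : Filter.Germ (φ : Filter I) k) = ((fun i => (q i).eval (x i) : I → k) :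
        Filter.Germ (φ : Filter I) k) := by
  induction p using Polynomial.induction_on' with
  | add p p' h h' =>
    obtain ⟨q, hq⟩ := h
    obtain ⟨q', hq'⟩ := h'
    refine ⟨fun i => q i + q' i, fun x => ?_⟩
    simp only [Polynomial.eval_add, hq, hq']
    rfl
  | monomial n c =>
    induction c using Filter.Germ.inductionOn with
    | _ c =>
      refine ⟨fun i => Polynomial.monomial n (c i), fun x => ?_⟩
      simp only [Polynomial.eval_monomial]
      rfl

variable {k Ω : Type} [Field k] [LinearOrder k] [IsStrictOrderedRing k]
  [Field Ω] [LinearOrder Ω] [IsStrictOrderedRing Ω]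

theorem germConst_strictMono {I : Type} (φ : Ultrafilter I) : StrictMono (germConst φ k) := by
  intro a b hab
  exact Filter.Germ.coe_lt.2 (Filter.Eventually.of_forall fun _ => hab)

theorem germ_ivt {I : Type} (φ : Ultrafilter I) (hk : PolyIVT k) :
    PolyIVT (Filter.Germ (φ : Filter I) k) := by
  classical
  intro p a b hab hlt
  obtain ⟨q, hq⟩ := germ_eval φ k p
  induction a using Filter.Germ.inductionOn with
  | _ a =>
  induction b using Filter.Germ.inductionOn with
  | _ b =>
  rw [Filter.Germ.coe_lt] at hab
  rw [hq, hq] at hlt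
  have hlt' : ∀ᶠ i in (φ : Filter I), (q i).eval (a i) * (q i).eval (b i) < 0 :=
    Filter.Germ.coe_lt.1 hlt
  have hex : ∀ i, ∃ c, (a i < b i ∧ (q i).eval (a i) * (q i).eval (b i) < 0) →
      (a i < c ∧ c < b i ∧ (q i).eval c = 0) := by
    intro i
    by_cases h : (a i < b i ∧ (q i).eval (a i) * (q i).eval (b i) < 0)
    · obtain ⟨c, hc⟩ := hk (q i) _ _ h.1 h.2
      exact ⟨c, fun _ => hc⟩
    · exact ⟨0, fun h' => absurd h' h⟩
  choose c hc using hex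
  have hev := hab.and hlt'
  refine ⟨(c : Filter.Germ (φ : Filter I) k), ?_, ?_, ?_⟩
  · exact Filter.Germ.coe_lt.2 (hev.mono fun i hi => (hc i hi).1)
  · exact Filter.Germ.coe_lt.2 (hev.mono fun i hi => (hc i hi).2.1)
  · rw [hq]
    exact Filter.Germ.coe_eq.2 (hev.mono fun i hi => (hc i hi).2.2)

theorem realize_cut (i : k →+* Ω) (hi : StrictMono i) (t : Ω) (ht : ∀ c, i c ≠ t) :
    ∃ (φ : Ultrafilter (Finset k)) (s : Filter.Germ (φ : Filter (Finset k)) k),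
      ∀ c, SignType.sign (t - i c) = SignType.sign (s - germConst φ k c) := by
  classical
  let φ : Ultrafilter (Finset k) := Ultrafilter.of Filter.atTop
  have hφ : (φ : Filter (Finset k)) ≤ Filter.atTop := Ultrafilter.of_le _
  have hex : ∀ S : Finset k, ∃ y : k, (∀ c ∈ S, i c < t → c < y) ∧ (∀ c ∈ S, t < i c → y < c) := by
    intro S
    obtain ⟨y, h1, h2⟩ := Order.exists_between_finsets (S.filter fun c => i c < t)
      (S.filter fun c => t < i c) (by
        intro x hx y hy
        exact hi.lt_iff_lt.1 ((Finset.mem_filter.1 hx).2.trans (Finset.mem_filter.1 hy).2))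
    exact ⟨y, fun c h h' => h1 c (Finset.mem_filter.2 ⟨h, h'⟩),
      fun c h h' => h2 c (Finset.mem_filter.2 ⟨h, h'⟩)⟩
  choose y hy1 hy2 using hex
  refine ⟨φ, (y : Filter.Germ (φ : Filter (Finset k)) k), fun c => ?_⟩
  have hev : ∀ᶠ S in (φ : Filter (Finset k)), c ∈ S := by
    apply hφ
    filter_upwards [Filter.eventually_ge_atTop ({c} : Finset k)] with S hS
    exact hS (by simp)
  rcases lt_or_gt_of_ne (ht c) with h | h
  · rw [sign_pos (sub_pos.2 h), sign_pos]
    rw [sub_pos]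
    exact Filter.Germ.coe_lt.2 (hev.mono fun S hS => hy1 S c hS h)
  · rw [sign_neg (sub_neg.2 h), sign_neg]
    rw [sub_neg]
    exact Filter.Germ.coe_lt.2 (hev.mono fun S hS => hy2 S c hS h)

theorem lift_hom {A B C : Type} [Field A] [Field B] [Field C] (j : B →+* C) (i : A →+* C)
    (h : ∀ a, ∃ b, j b = i a) : ∃ κ : A →+* B, j.comp κ = i := by
  choose f hf using h
  refine ⟨⟨⟨⟨f, ?_⟩, ?_⟩, ?_, ?_⟩, ?_⟩
  · apply j.injective; simp [hf]
  · intro x y; apply j.injective; simp [hf]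
  · apply j.injective; simp [hf]
  · intro x y; apply j.injective; simp [hf]
  · ext x; exact hf x

theorem ivt_of_rootsIn (hΩ : PolyIVT Ω) (j : k →+* Ω) (hj : StrictMono j) (r : ∀ d, RootsIn j d) :
    PolyIVT k := by
  intro p a b hab h
  have hp : p ≠ 0 := by rintro rfl; simp at h
  obtain ⟨c, h1, h2, h3⟩ := hΩ (p.map j) (j a) (j b) (hj hab) (by
    rw [Polynomial.eval_map_apply, Polynomial.eval_map_apply, ← map_mul, ← map_zero j]
    exact hj h)
  obtain ⟨e, rfl⟩ := r _ p hp (Nat.lt_succ_self _) c h3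
  refine ⟨e, hj.lt_iff_lt.1 h1, hj.lt_iff_lt.1 h2, ?_⟩
  simpa [Polynomial.eval_map_apply] using h3

theorem extend_step (hΩ : PolyIVT Ω) (hk : PolyIVT k) (i : k →+* Ω) (hi : StrictMono i) (t : Ω)
    (ht : ∀ c, i c ≠ t) :
    ∃ (K : Type) (_ : Field K) (_ : LinearOrder K) (_ : IsStrictOrderedRing K)
      (κ : k →+* K) (j : K →+* Ω) (φ : Ultrafilter (Finset k))
      (j₂ : K →+* Filter.Germ (φ : Filter (Finset k)) k),
      PolyIVT K ∧ StrictMono j ∧ StrictMono j₂ ∧ j.comp κ = i ∧ j₂.comp κ = germConst φ k ∧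
      ∃ c, j c = t := by
  obtain ⟨φ, s, hs⟩ := realize_cut i hi t ht
  have hG := germ_ivt φ hk
  let ψ : Polynomial k →+* Ω × Filter.Germ (φ : Filter (Finset k)) k :=
    (Polynomial.eval₂RingHom i t).prod (Polynomial.eval₂RingHom (germConst φ k) s)
  have hψ : GoodSpan ψ.range := by
    rintro _ ⟨p, rfl⟩
    have := sign_transfer hΩ hG i (germConst φ k) hi (germConst_strictMono φ) (p.natDegree + 1)
      (rootsIn_of_ivt hΩ hk i hi _) (rootsIn_of_ivt hG hk _ (germConst_strictMono φ) _) t s hs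
      _ p (Nat.lt_succ_self _) le_rfl
    simpa [ψ, Polynomial.eval_map] using this
  obtain ⟨K, _, _, _, j₁, j₂, m₁, m₂, hK, r₁, r₂⟩ := span_closure hΩ hG ψ.range hψ
  have hc : ∀ c, ∃ e, j₁ e = i c ∧ j₂ e = germConst φ k c := fun c => by
    obtain ⟨e, h1, h2⟩ := hK _ ⟨Polynomial.C c, rfl⟩
    exact ⟨e, by simpa [ψ] using h1, by simpa [ψ] using h2⟩
  obtain ⟨κ, hκ⟩ := lift_hom j₁ i (fun a => ⟨_, (hc a).choose_spec.1⟩)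
  refine ⟨K, _, _, ‹_›, κ, j₁, φ, j₂, ivt_of_rootsIn hΩ j₁ m₁ r₁, m₁, m₂, hκ, ?_, ?_⟩
  · ext c
    obtain ⟨e, h1, h2⟩ := hc c
    have : κ c = e := j₁.injective (by rw [h1, ← hκ]; rfl)
    simp [this, h2]
  · obtain ⟨e, h1, h2⟩ := hK _ ⟨Polynomial.X, rfl⟩
    exact ⟨e, by simpa [ψ] using h1⟩

theorem germ_mveval {I : Type} (φ : Ultrafilter I) {n : ℕ} (ρ : ℝ →+* k)
    (y : Fin n → I → k) (u : MvPolynomial (Fin n) ℝ) :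
    eval₂ ((germConst φ k).comp ρ) (fun l => ((y l : I → k) : Filter.Germ (φ : Filter I) k)) u =
      ((fun s => eval₂ ρ (fun l => y l s) u : I → k) : Filter.Germ (φ : Filter I) k) := by
  induction u using MvPolynomial.induction_on with
  | C a => simp only [eval₂_C]; rfl
  | add p q hp hq => simp only [eval₂_add, hp, hq]; rfl
  | mul_X p l hp => simp only [eval₂_mul, hp, eval₂_X]; rfl

theorem transfer_aux (hΩ : PolyIVT Ω) {n : ℕ} (u v : MvPolynomial (Fin n) ℝ) (m : ℕ) :
    ∀ (k : Type) [Field k] [LinearOrder k] [IsStrictOrderedRing k] (_ : PolyIVT k)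
      (i : k →+* Ω) (_ : StrictMono i) (ρ : ℝ →+* k) (x : Fin n → Ω)
      (_ : ∀ l, m ≤ l.val → ∃ c, i c = x l) (_ : 0 ≤ eval₂ (i.comp ρ) x u)
      (_ : 0 ≤ eval₂ (i.comp ρ) x v),
      ∃ y : Fin n → k, 0 ≤ eval₂ ρ y u ∧ 0 ≤ eval₂ ρ y v := by
  induction m with
  | zero =>
    intro k _ _ _ hk i hi ρ x hx hu hv
    choose y hy using fun l => hx l (Nat.zero_le _)
    have e : x = fun l => i (y l) := funext fun l => (hy l).symm
    have key : ∀ w : MvPolynomial (Fin n) ℝ, 0 ≤ eval₂ (i.comp ρ) x w → 0 ≤ eval₂ ρ y w := by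
      intro w hw
      have : eval₂ (i.comp ρ) x w = i (eval₂ ρ y w) := by
        rw [e, MvPolynomial.eval₂_comp_left]; rfl
      rw [this, ← map_zero i] at hw
      exact hi.le_iff_le.1 hw
    exact ⟨y, key u hu, key v hv⟩
  | succ m ih =>
    intro k _ _ _ hk i hi ρ x hx hu hv
    by_cases hm : m < n
    swap
    · exact ih k hk i hi ρ x (fun l hl => absurd l.isLt (by omega)) hu hv
    by_cases ht : ∃ c, i c = x ⟨m, hm⟩
    · refine ih k hk i hi ρ x (fun l hl => ?_) hu hv
      rcases hl.eq_or_lt with h | h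
      · have : l = ⟨m, hm⟩ := Fin.ext h.symm
        rw [this]; exact ht
      · exact hx l h
    push Not at ht
    obtain ⟨K, _, _, _, κ, j, φ, j₂, hK, mj, mj₂, e1, e2, c0, hc0⟩ := extend_step hΩ hk i hi _ ht
    rw [← e1, RingHom.comp_assoc] at hu hv
    obtain ⟨y, hyu, hyv⟩ := ih K hK j mj (κ.comp ρ) x (fun l hl => by
      rcases hl.eq_or_lt with h | h
      · have : l = ⟨m, hm⟩ := Fin.ext h.symm
        rw [this]; exact ⟨c0, hc0⟩
      · obtain ⟨c, hc⟩ := hx l h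
        exact ⟨κ c, by rw [← hc, ← e1]; rfl⟩) hu hv
    have hz : ∀ l, ∃ z : Finset k → k, (z : Filter.Germ (φ : Filter (Finset k)) k) = j₂ (y l) := by
      intro l
      induction j₂ (y l) using Filter.Germ.inductionOn with
      | _ z => exact ⟨z, rfl⟩
    choose z hz using hz
    have key : ∀ w : MvPolynomial (Fin n) ℝ, 0 ≤ eval₂ (κ.comp ρ) y w →
        ∀ᶠ s in (φ : Filter (Finset k)), 0 ≤ eval₂ ρ (fun l => z l s) w := by
      intro w hw
      have h1 : 0 ≤ j₂ (eval₂ (κ.comp ρ) y w) := by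
        rw [← map_zero j₂]; exact mj₂.monotone hw
      rw [MvPolynomial.eval₂_comp_left, ← RingHom.comp_assoc, e2] at h1
      have h2 : (⇑j₂ ∘ y) = fun l => ((z l : Finset k → k) : Filter.Germ (φ : Filter (Finset k)) k) :=
        funext fun l => (hz l).symm
      rw [h2, germ_mveval] at h1
      exact Filter.Germ.coe_le.1 h1
    obtain ⟨s, h1, h2⟩ := ((key u hyu).and (key v hyv)).exists
    exact ⟨_, h1, h2⟩

theorem real_ivt : PolyIVT ℝ := by
  intro p a b hab h
  have hc : ContinuousOn (fun x => p.eval x) (Set.Icc a b) := p.continuous.continuousOn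
  rcases mul_neg_iff.1 h with ⟨h1, h2⟩ | ⟨h1, h2⟩
  · obtain ⟨c, hc1, hc2⟩ := intermediate_value_Ioo' hab.le hc ⟨h2, h1⟩
    exact ⟨c, hc1.1, hc1.2, hc2⟩
  · obtain ⟨c, hc1, hc2⟩ := intermediate_value_Ioo hab.le hc ⟨h1, h2⟩
    exact ⟨c, hc1.1, hc1.2, hc2⟩

theorem real_transfer (hΩ : PolyIVT Ω) {n : ℕ} (u v : MvPolynomial (Fin n) ℝ) (i : ℝ →+* Ω)
    (x : Fin n → Ω) (hu : 0 ≤ eval₂ i x u) (hv : 0 ≤ eval₂ i x v) :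
    ∃ y : Fin n → ℝ, 0 ≤ eval y u ∧ 0 ≤ eval y v := by
  have hi : StrictMono i := by
    apply Monotone.strictMono_of_injective _ i.injective
    intro a b hab
    rw [← sub_nonneg, ← map_sub]
    have : b - a = Real.sqrt (b - a) * Real.sqrt (b - a) :=
      (Real.mul_self_sqrt (sub_nonneg.2 hab)).symm
    rw [this, map_mul]
    exact mul_self_nonneg _
  exact transfer_aux hΩ u v n ℝ real_ivt i hi (RingHom.id ℝ) x
    (fun l hl => absurd l.isLt (by omega)) hu hv
end Ultra

section Cone

theorem order_of_cone (E : Type) [Field E] (P : Set E) (h1 : (1 : E) ∈ P)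
    (hadd : ∀ a ∈ P, ∀ b ∈ P, a + b ∈ P) (hmul : ∀ a ∈ P, ∀ b ∈ P, a * b ∈ P)
    (htot : ∀ a, a ∈ P ∨ -a ∈ P) (hanti : ∀ a, a ∈ P → -a ∈ P → a = 0) :
    ∃ (_ : LinearOrder E) (_ : IsStrictOrderedRing E), ∀ x : E, 0 ≤ x ↔ x ∈ P := by
  classical
  have h0 : (0 : E) ∈ P := by rcases htot 0 with h | h <;> simpa using h
  let : LinearOrder E :=
    { le := fun a b => b - a ∈ P
      le_refl := fun a => by simpa using h0
      le_trans := fun a b c hab hbc => by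
        have := hadd _ hbc _ hab
        simpa using this
      le_antisymm := fun a b hab hba => by
        have := hanti (b - a) hab (by simpa using hba)
        exact (sub_eq_zero.1 this).symm
      le_total := fun a b => by
        rcases htot (b - a) with h | h
        · exact Or.inl h
        · right; simpa using h
      toDecidableLE := Classical.decRel _ }
  have hle : ∀ a b : E, a ≤ b ↔ b - a ∈ P := fun a b => Iff.rfl
  have : IsOrderedAddMonoid E :=
    { add_le_add_left := fun a b hab c => by rw [hle] at *; simpa using hab }
  have : ZeroLEOneClass E := ⟨by rw [hle]; simpa using h1⟩
  have : IsStrictOrderedRing E := IsStrictOrderedRing.of_mul_pos (by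
    intro a b ha hb
    apply lt_of_le_of_ne
    · have h2 := (hle _ _).1 ha.le
      have h3 := (hle _ _).1 hb.le
      rw [hle]
      simp only [sub_zero] at *
      exact hmul _ h2 _ h3
    · exact (mul_ne_zero ha.ne' hb.ne').symm)
  exact ⟨_, this, fun x => by rw [hle, sub_zero]⟩

variable {C : Type} [Field C]

/-- Positive cones of (partially) ordered subfields. -/
structure GoodCone (P : Set C) : Prop where
  one : (1 : C) ∈ P
  add : ∀ a ∈ P, ∀ b ∈ P, a + b ∈ P
  mul : ∀ a ∈ P, ∀ b ∈ P, a * b ∈ P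
  inv : ∀ a ∈ P, a⁻¹ ∈ P
  sq : ∀ a ∈ P, ∀ b ∈ P, (a - b) ^ 2 ∈ P
  neg : (-1 : C) ∉ P

/-- The cone generated by `Q` and the squares of `D`. -/
def coneGen (Q : Set C) (D : Subfield C) : AddSubmonoid C :=
  AddSubmonoid.closure {x | ∃ q ∈ Q, ∃ s ∈ D, x = q * s ^ 2}

theorem coneGen_sub (Q : Set C) (D : Subfield C) : Q ⊆ coneGen Q D := fun q hq =>
  AddSubmonoid.subset_closure ⟨q, hq, 1, one_mem _, by simp⟩

theorem coneGen_sq (Q : Set C) (h1 : (1 : C) ∈ Q) (D : Subfield C) (d : C) (hd : d ∈ D) :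
    d ^ 2 ∈ coneGen Q D :=
  AddSubmonoid.subset_closure ⟨1, h1, d, hd, by simp⟩

theorem coneGen_mem (Q : Set C) (D : Subfield C) (hQD : Q ⊆ D) : ∀ x ∈ coneGen Q D, x ∈ D := by
  intro x hx
  have : coneGen Q D ≤ D.toAddSubgroup.toAddSubmonoid := by
    rw [coneGen, AddSubmonoid.closure_le]
    rintro _ ⟨q, hq, s, hs, rfl⟩
    show q * s ^ 2 ∈ D
    exact mul_mem (hQD hq) (pow_mem hs 2)
  exact this hx

theorem coneGen_good (Q : Set C) (h1 : (1 : C) ∈ Q) (hmul : ∀ a ∈ Q, ∀ b ∈ Q, a * b ∈ Q)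
    (D : Subfield C) (hQD : Q ⊆ D) (hneg : (-1 : C) ∉ coneGen Q D) :
    GoodCone (coneGen Q D : Set C) := by
  have hm : ∀ a ∈ coneGen Q D, ∀ b ∈ coneGen Q D, a * b ∈ coneGen Q D := by
    intro a ha b hb
    induction ha using AddSubmonoid.closure_induction with
    | zero => simp
    | add x y _ _ hx hy => rw [add_mul]; exact add_mem hx hy
    | mem x hx =>
      obtain ⟨q, hq, s, hs, rfl⟩ := hx
      induction hb using AddSubmonoid.closure_induction with
      | zero => simp
      | add x y _ _ hx hy => rw [mul_add]; exact add_mem hx hy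
      | mem x hx =>
        obtain ⟨q', hq', s', hs', rfl⟩ := hx
        exact AddSubmonoid.subset_closure ⟨q * q', hmul _ hq _ hq', s * s', mul_mem hs hs', by ring⟩
  refine ⟨coneGen_sub Q D h1, fun a ha b hb => add_mem ha hb, hm, ?_, ?_, hneg⟩
  · intro a ha
    by_cases h0 : a = 0
    · simpa [h0] using zero_mem _
    have e : a⁻¹ = a * a⁻¹ ^ 2 := by field_simp
    rw [e]
    exact hm _ ha _ (coneGen_sq Q h1 D _ (inv_mem (coneGen_mem Q D hQD a ha)))
  · intro a ha b hb
    exact coneGen_sq Q h1 D _ (sub_mem (coneGen_mem Q D hQD a ha) (coneGen_mem Q D hQD b hb))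

theorem GoodCone.exists_max (P₀ : Set C) (h : GoodCone P₀) :
    ∃ P, P₀ ⊆ P ∧ GoodCone P ∧ ∀ P', GoodCone P' → P ⊆ P' → P' ⊆ P := by
  obtain ⟨P, h1, h2⟩ := zorn_subset_nonempty {P : Set C | GoodCone P} (by
    intro c hc hch hne
    refine ⟨⋃₀ c, ?_, fun s hs => Set.subset_sUnion_of_mem hs⟩
    obtain ⟨s0, hs0⟩ := hne
    have two : ∀ a ∈ ⋃₀ c, ∀ b ∈ ⋃₀ c, ∃ s ∈ c, a ∈ s ∧ b ∈ s := by
      rintro a ⟨s, hs, ha⟩ b ⟨t, ht, hb⟩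
      rcases hch.total hs ht with h | h
      · exact ⟨t, ht, h ha, hb⟩
      · exact ⟨s, hs, ha, h hb⟩
    refine ⟨⟨s0, hs0, (hc hs0).one⟩, ?_, ?_, ?_, ?_, ?_⟩
    · intro a ha b hb
      obtain ⟨s, hs, h1, h2⟩ := two a ha b hb
      exact ⟨s, hs, (hc hs).add a h1 b h2⟩
    · intro a ha b hb
      obtain ⟨s, hs, h1, h2⟩ := two a ha b hb
      exact ⟨s, hs, (hc hs).mul a h1 b h2⟩
    · rintro a ⟨s, hs, ha⟩
      exact ⟨s, hs, (hc hs).inv a ha⟩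
    · intro a ha b hb
      obtain ⟨s, hs, h1, h2⟩ := two a ha b hb
      exact ⟨s, hs, (hc hs).sq a h1 b h2⟩
    · rintro ⟨s, hs, ha⟩
      exact (hc hs).neg ha) P₀ h
  exact ⟨P, h1, h2.1, fun P' h3 h4 => h2.2 h3 h4⟩

theorem GoodCone.zero {P : Set C} (h : GoodCone P) : (0 : C) ∈ P := by
  simpa using h.sq 1 h.one 1 h.one

/-- The subfield generated by a cone. -/
def coneField (P : Set C) (h : GoodCone P) : Subfield C where
  carrier := {x | ∃ a ∈ P, ∃ b ∈ P, x = a - b}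
  one_mem' := ⟨1, h.one, 0, h.zero, by simp⟩
  zero_mem' := ⟨0, h.zero, 0, h.zero, by simp⟩
  add_mem' := by
    rintro _ _ ⟨a, ha, b, hb, rfl⟩ ⟨a', ha', b', hb', rfl⟩
    exact ⟨a + a', h.add _ ha _ ha', b + b', h.add _ hb _ hb', by ring⟩
  mul_mem' := by
    rintro _ _ ⟨a, ha, b, hb, rfl⟩ ⟨a', ha', b', hb', rfl⟩
    exact ⟨a * a' + b * b', h.add _ (h.mul _ ha _ ha') _ (h.mul _ hb _ hb'),
      a * b' + b * a', h.add _ (h.mul _ ha _ hb') _ (h.mul _ hb _ ha'), by ring⟩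
  neg_mem' := by
    rintro _ ⟨a, ha, b, hb, rfl⟩
    exact ⟨b, hb, a, ha, by ring⟩
  inv_mem' := by
    rintro _ ⟨a, ha, b, hb, rfl⟩
    have hs := h.inv _ (h.sq a ha b hb)
    refine ⟨a * ((a - b) ^ 2)⁻¹, h.mul _ ha _ hs, b * ((a - b) ^ 2)⁻¹, h.mul _ hb _ hs, ?_⟩
    by_cases h0 : a - b = 0
    · simp [h0]
    · rw [← sub_mul]; field_simp

theorem mem_coneField {P : Set C} (h : GoodCone P) {x : C} (hx : x ∈ P) : x ∈ coneField P h :=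
  ⟨x, hx, 0, h.zero, by simp⟩

theorem coneField_sq {P : Set C} (h : GoodCone P) {x : C} (hx : x ∈ coneField P h) : x ^ 2 ∈ P := by
  obtain ⟨a, ha, b, hb, rfl⟩ := hx
  exact h.sq a ha b hb

theorem cone_total {P : Set C} (h : GoodCone P)
    (hmax : ∀ P', GoodCone P' → P ⊆ P' → P' ⊆ P) (e : C) (he : e ∈ coneField P h) :
    e ∈ P ∨ -e ∈ P := by
  by_contra hcon
  push Not at hcon
  let Q : Set C := {x | ∃ p ∈ P, ∃ q ∈ P, x = p + e * q}
  have hPQ : P ⊆ Q := fun p hp => ⟨p, hp, 0, h.zero, by simp⟩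
  have heQ : e ∈ Q := ⟨0, h.zero, 1, h.one, by simp⟩
  have hQm : ∀ a ∈ Q, ∀ b ∈ Q, a * b ∈ Q := by
    rintro _ ⟨p, hp, q, hq, rfl⟩ _ ⟨p', hp', q', hq', rfl⟩
    exact ⟨p * p' + e ^ 2 * (q * q'), h.add _ (h.mul _ hp _ hp') _
      (h.mul _ (coneField_sq h he) _ (h.mul _ hq _ hq')), p * q' + q * p',
      h.add _ (h.mul _ hp _ hq') _ (h.mul _ hq _ hp'), by ring⟩
  have hQD : Q ⊆ coneField P h := by
    rintro _ ⟨p, hp, q, hq, rfl⟩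
    exact add_mem (mem_coneField h hp) (mul_mem he (mem_coneField h hq))
  have hcQ : ∀ x ∈ coneGen Q (coneField P h), x ∈ Q := by
    intro x hx
    induction hx using AddSubmonoid.closure_induction with
    | zero => exact hPQ h.zero
    | add x y _ _ hx hy =>
      obtain ⟨p, hp, q, hq, rfl⟩ := hx
      obtain ⟨p', hp', q', hq', rfl⟩ := hy
      exact ⟨p + p', h.add _ hp _ hp', q + q', h.add _ hq _ hq', by ring⟩
    | mem x hx =>
      obtain ⟨q, hq, s, hs, rfl⟩ := hx
      exact hQm _ hq _ (hPQ (coneField_sq h hs))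
  have hneg : (-1 : C) ∈ coneGen Q (coneField P h) := by
    by_contra hneg
    have hg := coneGen_good Q (hPQ h.one) hQm _ hQD hneg
    exact hcon.1 (hmax _ hg (hPQ.trans (coneGen_sub _ _)) (coneGen_sub _ _ heQ))
  obtain ⟨p, hp, q, hq, hpq⟩ := hcQ _ hneg
  by_cases hq0 : q = 0
  · apply h.neg; rw [hpq, hq0]; simpa using hp
  · apply hcon.2
    have : -e = (1 + p) * q⁻¹ := by
      field_simp
      linear_combination hpq
    rw [this]
    exact h.mul _ (h.add _ h.one _ hp) _ (h.inv _ hq)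

theorem cone_anti {P : Set C} (h : GoodCone P) (x : C) (h1 : x ∈ P) (h2 : -x ∈ P) : x = 0 := by
  by_contra h0
  apply h.neg
  have := h.mul _ h2 _ (h.inv _ h1)
  rwa [neg_mul, mul_inv_cancel₀ h0] at this

theorem cone_max_sub [CharZero C] {P : Set C} (h : GoodCone P)
    (hmax : ∀ P', GoodCone P' → P ⊆ P' → P' ⊆ P) (D : Subfield C) (hD : coneField P h ≤ D)
    (hneg : (-1 : C) ∉ coneGen P D) : D ≤ coneField P h := by
  intro d hd
  have hPD : P ⊆ D := fun p hp => hD (mem_coneField h hp)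
  have hg := coneGen_good P h.one h.mul D hPD hneg
  have hsub := hmax _ hg (coneGen_sub _ _)
  have h2 : (2 : C) ∈ D := by exact_mod_cast natCast_mem D 2
  refine ⟨((d + 1) / 2) ^ 2, hsub (coneGen_sq P h.one D _ ?_), ((d - 1) / 2) ^ 2,
    hsub (coneGen_sq P h.one D _ ?_), by ring⟩
  · exact div_mem (add_mem hd (one_mem _)) h2
  · exact div_mem (sub_mem hd (one_mem _)) h2

end Cone

section RCF
variable {C : Type} [Field C]

theorem cone_poly {P : Set C} (h : GoodCone P)
    [LinearOrder (coneField P h)] [IsStrictOrderedRing (coneField P h)]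
    (hord : ∀ x : coneField P h, 0 ≤ x ↔ (x : C) ∈ P) (α : C)
    (f : Polynomial (coneField P h)) (hf : 0 < f.natDegree) (hα : Polynomial.aeval α f = 0)
    (x : C)
    (hx : x ∈ coneGen P (IntermediateField.adjoin (coneField P h) {α}).toSubfield) :
    ∃ W : Polynomial (coneField P h), Polynomial.aeval α W = x ∧
      W.natDegree ≤ 2 * (f.natDegree - 1) ∧ ∀ c, 0 ≤ W.eval c := by
  induction hx using AddSubmonoid.closure_induction with
  | zero => exact ⟨0, by simp, by simp, by simp⟩
  | add x y _ _ hx hy =>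
    obtain ⟨W, h1, h2, h3⟩ := hx
    obtain ⟨W', h1', h2', h3'⟩ := hy
    refine ⟨W + W', by simp [h1, h1'], (Polynomial.natDegree_add_le _ _).trans (max_le h2 h2'), ?_⟩
    intro c
    rw [Polynomial.eval_add]
    exact add_nonneg (h3 c) (h3' c)
  | mem x hx =>
    obtain ⟨q, hq, s, hs, rfl⟩ := hx
    have hs' : s ∈ IntermediateField.adjoin (coneField P h) {α} := hs
    have hint : IsIntegral (coneField P h) α := by
      rw [← isAlgebraic_iff_isIntegral]
      exact ⟨f, by rintro rfl; simp at hf, hα⟩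
    rw [← IntermediateField.mem_toSubalgebra,
      IntermediateField.adjoin_simple_toSubalgebra_of_isAlgebraic hint.isAlgebraic,
      Algebra.adjoin_singleton_eq_range_aeval] at hs'
    obtain ⟨r, hr⟩ := hs'
    have hr' : Polynomial.aeval α r = s := hr
    have hmod : Polynomial.aeval α (r % f) = s := by
      have := EuclideanDomain.div_add_mod r f
      rw [← hr']
      conv_rhs => rw [← this]
      simp [hα]
    have hdeg : (r % f).natDegree ≤ f.natDegree - 1 := by
      have := Polynomial.natDegree_mod_lt r hf.ne'
      omega
    refine ⟨Polynomial.C ⟨q, mem_coneField h hq⟩ * (r % f) ^ 2, ?_, ?_, ?_⟩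
    · rw [map_mul, map_pow, hmod, Polynomial.aeval_C]
      rfl
    · refine (Polynomial.natDegree_C_mul_le _ _).trans ?_
      rw [Polynomial.natDegree_pow]
      omega
    · intro c
      rw [Polynomial.eval_mul, Polynomial.eval_C, Polynomial.eval_pow]
      exact mul_nonneg ((hord _).2 hq) (sq_nonneg _)

theorem neg_split {F : Type} [Field F] [LinearOrder F] [IsStrictOrderedRing F] (x y z w : F)
    (h : (x * y) * (z * w) < 0) : x * z < 0 ∨ y * w < 0 := by
  by_contra hc
  push Not at hc
  have := mul_nonneg hc.1 hc.2
  nlinarith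

theorem neg_of_pos {F : Type} [Field F] [LinearOrder F] [IsStrictOrderedRing F] (x y z w : F)
    (h1 : 0 < x * y) (h2 : 0 < z * w) (h3 : x * z < 0) : y * w < 0 := by
  have := mul_pos h1 h2
  by_contra hc
  push Not at hc
  have := mul_nonneg hc (neg_nonneg.2 h3.le)
  nlinarith

theorem lin_split {F : Type} [Field F] [LinearOrder F] [IsStrictOrderedRing F] (a b t k : F)
    (hab : a < b) (hf : ((a - t) * k) * ((b - t) * k) < 0) : a < t ∧ t < b := by
  have h5 : (a - t) * (b - t) < 0 := by
    by_contra hc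
    push Not at hc
    nlinarith [mul_nonneg hc (mul_self_nonneg k)]
  constructor
  · by_contra hc
    push Not at hc
    nlinarith [mul_nonneg (sub_nonneg.2 hc) (sub_nonneg.2 (hc.trans hab.le))]
  · by_contra hc
    push Not at hc
    nlinarith [mul_nonneg (sub_nonneg.2 hc) (sub_nonneg.2 (hab.le.trans hc))]

set_option maxHeartbeats 1000000 in
theorem cone_ivt [CharZero C] [IsAlgClosed C] {P : Set C} (h : GoodCone P)
    (hmax : ∀ P', GoodCone P' → P ⊆ P' → P' ⊆ P)
    [LinearOrder (coneField P h)] [IsStrictOrderedRing (coneField P h)]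
    (hord : ∀ x : coneField P h, 0 ≤ x ↔ (x : C) ∈ P) : PolyIVT (coneField P h) := by
  intro p a b hab hp
  suffices H : ∀ N, ∀ f : Polynomial (coneField P h), f.natDegree = N → f.eval a * f.eval b < 0 →
      ∃ c, a < c ∧ c < b ∧ f.eval c = 0 from H _ p rfl hp
  intro N
  induction N using Nat.strong_induction_on with
  | _ N ih =>
  intro f hN hf
  have hf0 : f ≠ 0 := by rintro rfl; simp at hf
  have hfd : 0 < f.natDegree := by
    by_contra hd
    rw [Polynomial.eq_C_of_natDegree_eq_zero (by omega : f.natDegree = 0)] at hf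
    simp only [Polynomial.eval_C] at hf
    nlinarith [mul_self_nonneg (f.coeff 0)]
  have key : ∀ g k : Polynomial (coneField P h), f = g * k → 0 < g.natDegree → 0 < k.natDegree →
      ∃ c, a < c ∧ c < b ∧ f.eval c = 0 := by
    intro g k hgk hg hk
    have hd : f.natDegree = g.natDegree + k.natDegree := by
      rw [hgk, Polynomial.natDegree_mul]
      · rintro rfl; simp at hg
      · rintro rfl; simp at hk
    rw [hgk, Polynomial.eval_mul, Polynomial.eval_mul] at hf
    rcases neg_split _ _ _ _ hf with h1 | h1
    · obtain ⟨c, h2, h3, h4⟩ := ih g.natDegree (by omega) g rfl h1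
      exact ⟨c, h2, h3, by rw [hgk, Polynomial.eval_mul, h4, zero_mul]⟩
    · obtain ⟨c, h2, h3, h4⟩ := ih k.natDegree (by omega) k rfl h1
      exact ⟨c, h2, h3, by rw [hgk, Polynomial.eval_mul, h4, mul_zero]⟩
  by_cases hirr : Irreducible f
  · obtain ⟨α, hα⟩ := IsAlgClosed.exists_aeval_eq_zero C f (by
      rw [Polynomial.degree_eq_natDegree hf0]; exact_mod_cast hfd.ne')
    by_cases hneg : (-1 : C) ∈
        coneGen P (IntermediateField.adjoin (coneField P h) {α}).toSubfield
    · obtain ⟨W, h1, h2, h3⟩ := cone_poly h hord α f hfd hα _ hneg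
      have hdvd : f ∣ W + 1 := by
        have e := minpoly.eq_of_irreducible hirr hα
        have : minpoly (coneField P h) α ∣ W + 1 := minpoly.dvd _ _ (by simp [h1])
        rw [← e] at this
        exact (dvd_mul_right _ _).trans this
      obtain ⟨k, hk⟩ := hdvd
      have hpos : ∀ c, 0 < (W + 1).eval c := by
        intro c
        rw [Polynomial.eval_add, Polynomial.eval_one]
        linarith [h3 c]
      have hk0 : k ≠ 0 := by
        rintro rfl
        have := hpos 0
        rw [hk] at this; simp at this
      have hkd : k.natDegree < N := by
        have := congrArg Polynomial.natDegree hk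
        rw [Polynomial.natDegree_mul hf0 hk0] at this
        have h4 : (W + 1).natDegree ≤ 2 * (f.natDegree - 1) :=
          (Polynomial.natDegree_add_le _ _).trans (max_le h2 (by simp))
        omega
      have hka : k.eval a * k.eval b < 0 := by
        have ha := hpos a
        have hb := hpos b
        rw [hk, Polynomial.eval_mul] at ha hb
        exact neg_of_pos _ _ _ _ ha hb hf
      obtain ⟨c, _, _, hc⟩ := ih _ hkd k rfl hka
      have := hpos c
      rw [hk, Polynomial.eval_mul, hc] at this
      simp at this
    · have hle := cone_max_sub h hmax _ (by
        intro x hx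
        exact (IntermediateField.adjoin (coneField P h) {α}).algebraMap_mem ⟨x, hx⟩) hneg
      have hαE : α ∈ coneField P h := hle (IntermediateField.mem_adjoin_simple_self _ α)
      have hroot : f.IsRoot ⟨α, hαE⟩ := by
        have : algebraMap (coneField P h) C (f.eval ⟨α, hαE⟩) = 0 := by
          rw [← hα, ← Polynomial.aeval_algebraMap_apply_eq_algebraMap_eval]
          rfl
        exact (map_eq_zero _).1 this
      by_cases hin : a < ⟨α, hαE⟩ ∧ ⟨α, hαE⟩ < b
      · exact ⟨_, hin.1, hin.2, hroot⟩
      · obtain ⟨k, hk⟩ := Polynomial.dvd_iff_isRoot.2 hroot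
        generalize (⟨α, hαE⟩ : coneField P h) = t at hk hin
        by_cases hkd : 0 < k.natDegree
        · exact key _ k hk (by simp) hkd
        · exfalso
          apply hin
          rw [Polynomial.eq_C_of_natDegree_eq_zero (by omega : k.natDegree = 0)] at hk
          rw [hk] at hf
          simp only [Polynomial.eval_mul, Polynomial.eval_sub, Polynomial.eval_X,
            Polynomial.eval_C] at hf
          exact lin_split a b t _ hab hf
  · rw [irreducible_iff] at hirr
    have hu : ¬ IsUnit f := fun hu => by
      have := Polynomial.natDegree_eq_zero_of_isUnit hu
      omega
    push Not at hirr
    obtain ⟨g, k, hgk, hg, hk⟩ := hirr hu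
    have hg0 : g ≠ 0 := by rintro rfl; simp at hgk; exact hf0 hgk
    have hk0 : k ≠ 0 := by rintro rfl; simp at hgk; exact hf0 hgk
    exact key g k hgk
      (Polynomial.natDegree_pos_iff_degree_pos.2 (Polynomial.degree_pos_of_ne_zero_of_nonunit hg0 hg))
      (Polynomial.natDegree_pos_iff_degree_pos.2 (Polynomial.degree_pos_of_ne_zero_of_nonunit hk0 hk))

theorem rcf_exists [CharZero C] [IsAlgClosed C] (P₀ : Set C) (h₀ : GoodCone P₀) :
    ∃ (Ω : Type) (_ : Field Ω) (_ : LinearOrder Ω) (_ : IsStrictOrderedRing Ω),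
      PolyIVT Ω ∧ ∃ j : Ω →+* C, ∀ x ∈ P₀, ∃ w, j w = x ∧ 0 ≤ w := by
  obtain ⟨P, hP0, h, hmax⟩ := GoodCone.exists_max P₀ h₀
  obtain ⟨o, hs, ho⟩ := order_of_cone (coneField P h) {e | (e : C) ∈ P} h.one
    (fun a ha b hb => h.add _ ha _ hb) (fun a ha b hb => h.mul _ ha _ hb)
    (fun a => cone_total h hmax a a.2) (fun a h1 h2 => Subtype.ext (cone_anti h _ h1 h2))
  exact ⟨coneField P h, inferInstance, o, hs, cone_ivt h hmax ho, (coneField P h).subtype,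
    fun x hx => ⟨⟨x, mem_coneField h (hP0 hx)⟩, rfl, (ho _).2 (hP0 hx)⟩⟩

end RCF

section PS

/-- Proper preorderings. -/
structure PreO {A : Type} [CommRing A] (P : Set A) : Prop where
  add : ∀ a ∈ P, ∀ b ∈ P, a + b ∈ P
  mul : ∀ a ∈ P, ∀ b ∈ P, a * b ∈ P
  sq : ∀ a, a ^ 2 ∈ P
  neg : (-1 : A) ∉ P

variable {A : Type} [CommRing A]

theorem PreO.one {P : Set A} (h : PreO P) : (1 : A) ∈ P := by simpa using h.sq 1
theorem PreO.zero {P : Set A} (h : PreO P) : (0 : A) ∈ P := by simpa using h.sq 0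

theorem PreO.exists_max (P₀ : Set A) (h : PreO P₀) :
    ∃ P, P₀ ⊆ P ∧ PreO P ∧ ∀ P', PreO P' → P ⊆ P' → P' ⊆ P := by
  obtain ⟨P, h1, h2⟩ := zorn_subset_nonempty {P : Set A | PreO P} (by
    intro c hc hch hne
    refine ⟨⋃₀ c, ?_, fun s hs => Set.subset_sUnion_of_mem hs⟩
    obtain ⟨s0, hs0⟩ := hne
    have two : ∀ a ∈ ⋃₀ c, ∀ b ∈ ⋃₀ c, ∃ s ∈ c, a ∈ s ∧ b ∈ s := by
      rintro a ⟨s, hs, ha⟩ b ⟨t, ht, hb⟩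
      rcases hch.total hs ht with h | h
      · exact ⟨t, ht, h ha, hb⟩
      · exact ⟨s, hs, ha, h hb⟩
    refine ⟨?_, ?_, fun a => ⟨s0, hs0, (hc hs0).sq a⟩, ?_⟩
    · intro a ha b hb
      obtain ⟨s, hs, h1, h2⟩ := two a ha b hb
      exact ⟨s, hs, (hc hs).add a h1 b h2⟩
    · intro a ha b hb
      obtain ⟨s, hs, h1, h2⟩ := two a ha b hb
      exact ⟨s, hs, (hc hs).mul a h1 b h2⟩
    · rintro ⟨s, hs, ha⟩
      exact (hc hs).neg ha) P₀ h
  exact ⟨P, h1, h2.1, fun P' h3 h4 => h2.2 h3 h4⟩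

theorem PreO.ext_neg {P : Set A} (h : PreO P) (hmax : ∀ P', PreO P' → P ⊆ P' → P' ⊆ P)
    (a : A) (ha : a ∉ P) : ∃ s ∈ P, ∃ t ∈ P, -1 = s + a * t := by
  by_contra hc
  have hQ : PreO {x | ∃ s ∈ P, ∃ t ∈ P, x = s + a * t} := by
    refine ⟨?_, ?_, fun b => ⟨b ^ 2, h.sq b, 0, h.zero, by ring⟩, hc⟩
    · rintro _ ⟨s, hs, t, ht, rfl⟩ _ ⟨s', hs', t', ht', rfl⟩
      exact ⟨s + s', h.add _ hs _ hs', t + t', h.add _ ht _ ht', by ring⟩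
    · rintro _ ⟨s, hs, t, ht, rfl⟩ _ ⟨s', hs', t', ht', rfl⟩
      exact ⟨s * s' + a ^ 2 * (t * t'), h.add _ (h.mul _ hs _ hs') _
        (h.mul _ (h.sq a) _ (h.mul _ ht _ ht')), s * t' + t * s',
        h.add _ (h.mul _ hs _ ht') _ (h.mul _ ht _ hs'), by ring⟩
  exact ha (hmax _ hQ (fun p hp => ⟨p, hp, 0, h.zero, by ring⟩) ⟨0, h.zero, 1, h.one, by ring⟩)

theorem PreO.total {P : Set A} (h : PreO P) (hmax : ∀ P', PreO P' → P ⊆ P' → P' ⊆ P)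
    (a : A) : a ∈ P ∨ -a ∈ P := by
  by_contra hc
  push Not at hc
  obtain ⟨s, hs, t, ht, h1⟩ := h.ext_neg hmax _ hc.1
  obtain ⟨s', hs', t', ht', h2⟩ := h.ext_neg hmax _ hc.2
  apply h.neg
  have : (-1 : A) = s + s' + s * s' + a ^ 2 * (t * t') := by
    linear_combination (1 + s') * h1 - a * t * h2
  rw [this]
  exact h.add _ (h.add _ (h.add _ hs _ hs') _ (h.mul _ hs _ hs')) _
    (h.mul _ (h.sq a) _ (h.mul _ ht _ ht'))

/-- The support ideal. -/
def PreO.supp {P : Set A} (_ : PreO P) (h : PreO P) (htot : ∀ a, a ∈ P ∨ -a ∈ P) : Ideal A where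
  carrier := {a | a ∈ P ∧ -a ∈ P}
  zero_mem' := ⟨h.zero, by simpa using h.zero⟩
  add_mem' := by
    rintro a b ⟨h1, h2⟩ ⟨h3, h4⟩
    exact ⟨h.add _ h1 _ h3, by rw [neg_add]; exact h.add _ h2 _ h4⟩
  smul_mem' := by
    rintro c a ⟨h1, h2⟩
    rw [smul_eq_mul]
    rcases htot c with hc | hc
    · exact ⟨h.mul _ hc _ h1, by rw [← mul_neg]; exact h.mul _ hc _ h2⟩
    · exact ⟨by rw [← neg_mul_neg]; exact h.mul _ hc _ h2,
        by rw [← neg_mul]; exact h.mul _ hc _ h1⟩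

theorem PreO.supp_prime {P : Set A} (h : PreO P) (hmax : ∀ P', PreO P' → P ⊆ P' → P' ⊆ P)
    (htot : ∀ a, a ∈ P ∨ -a ∈ P) : (h.supp h htot).IsPrime := by
  have hmem : ∀ a, a ∈ h.supp h htot ↔ a ∈ P ∧ -a ∈ P := fun a => Iff.rfl
  have hex : ∀ a, a ∉ h.supp h htot → ∃ s ∈ P, ∃ t, 1 + s = a * t := by
    intro a ha
    rw [hmem, not_and_or] at ha
    rcases ha with ha | ha
    · obtain ⟨s, hs, t, ht, h1⟩ := h.ext_neg hmax _ ha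
      exact ⟨s, hs, -t, by linear_combination -h1⟩
    · obtain ⟨s, hs, t, ht, h1⟩ := h.ext_neg hmax _ ha
      exact ⟨s, hs, t, by linear_combination -h1⟩
  refine ⟨?_, ?_⟩
  · rw [Ideal.ne_top_iff_one, hmem]
    exact fun hc => h.neg hc.2
  · intro a b hab
    by_contra hc
    push Not at hc
    obtain ⟨s, hs, t, h1⟩ := hex _ hc.1
    obtain ⟨s', hs', t', h2⟩ := hex _ hc.2
    have h3 := Ideal.mul_mem_right (t * t') _ hab
    apply h.neg
    have : (-1 : A) = -(a * b * (t * t')) + (s + s' + s * s') := by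
      linear_combination (-(1 + s')) * h1 - a * t * h2
    rw [this]
    exact h.add _ h3.2 _ (h.add _ (h.add _ hs _ hs') _ (h.mul _ hs _ hs'))

theorem cone_of_preO {P : Set A} (h : PreO P) (I : Ideal A) [I.IsPrime]
    (hI : ∀ a, a ∈ I ↔ a ∈ P ∧ -a ∈ P) {C : Type} [Field C]
    [Algebra (FractionRing (A ⧸ I)) C] (φ : A →+* C)
    (hφ : φ = (algebraMap (FractionRing (A ⧸ I)) C).comp
      ((algebraMap (A ⧸ I) (FractionRing (A ⧸ I))).comp (Ideal.Quotient.mk I))) :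
    ∃ P₀ : Set C, GoodCone P₀ ∧ ∀ a ∈ P, φ a ∈ P₀ := by
  have hker : ∀ a, φ a = 0 ↔ a ∈ I := by
    intro a
    rw [hφ]
    simp only [RingHom.comp_apply, map_eq_zero]
    rw [IsFractionRing.to_map_eq_zero_iff, Ideal.Quotient.eq_zero_iff_mem]
  let D : Subfield C := (algebraMap (FractionRing (A ⧸ I)) C).fieldRange
  have hφD : ∀ a, φ a ∈ D := by
    intro a; rw [hφ]; exact ⟨_, rfl⟩
  have hD : ∀ d ∈ D, ∃ r b, b ∉ I ∧ d * φ b = φ r := by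
    rintro _ ⟨y, rfl⟩
    obtain ⟨r, b, hb, rfl⟩ := IsFractionRing.div_surjective (A := A ⧸ I) y
    obtain ⟨r, rfl⟩ := Ideal.Quotient.mk_surjective r
    obtain ⟨b, rfl⟩ := Ideal.Quotient.mk_surjective b
    have hbI : b ∉ I := by
      intro hc
      have := nonZeroDivisors.ne_zero hb
      exact this (Ideal.Quotient.eq_zero_iff_mem.2 hc)
    refine ⟨r, b, hbI, ?_⟩
    have h0 := (hker b).not.2 hbI
    rw [hφ] at *
    simp only [RingHom.comp_apply, map_div₀] at *
    field_simp
  have h1Q : (1 : C) ∈ φ '' P := ⟨1, h.one, map_one _⟩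
  have hQm : ∀ a ∈ φ '' P, ∀ b ∈ φ '' P, a * b ∈ φ '' P := by
    rintro _ ⟨a, ha, rfl⟩ _ ⟨b, hb, rfl⟩
    exact ⟨a * b, h.mul _ ha _ hb, map_mul _ _ _⟩
  have hQD : φ '' P ⊆ D := by
    rintro _ ⟨a, ha, rfl⟩
    exact hφD a
  have hgen : ∀ x ∈ coneGen (φ '' P) D, ∃ b, b ∉ I ∧ ∃ p ∈ P, x * φ b ^ 2 = φ p := by
    intro x hx
    induction hx using AddSubmonoid.closure_induction with
    | zero => exact ⟨1, (Ideal.ne_top_iff_one I).1 (Ideal.IsPrime.ne_top ‹_›), 0, h.zero, by simp⟩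
    | add x y _ _ hx hy =>
      obtain ⟨b, hb, p, hp, h1⟩ := hx
      obtain ⟨b', hb', p', hp', h2⟩ := hy
      refine ⟨b * b', fun hc => ?_, p * b' ^ 2 + p' * b ^ 2, h.add _ (h.mul _ hp _ (h.sq _)) _
        (h.mul _ hp' _ (h.sq _)), ?_⟩
      · rcases (Ideal.IsPrime.mem_or_mem ‹_› hc) with hc | hc
        · exact hb hc
        · exact hb' hc
      · simp only [map_add, map_mul, map_pow, ← h1, ← h2]; ring
    | mem x hx =>
      obtain ⟨_, ⟨p, hp, rfl⟩, s, hs, rfl⟩ := hx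
      obtain ⟨r, b, hb, h1⟩ := hD s hs
      refine ⟨b, hb, p * r ^ 2, h.mul _ hp _ (h.sq _), ?_⟩
      simp only [map_mul, map_pow, ← h1]; ring
  refine ⟨_, coneGen_good (φ '' P) h1Q hQm D hQD ?_, fun a ha => coneGen_sub _ _ ⟨a, ha, rfl⟩⟩
  intro hc
  obtain ⟨b, hb, p, hp, h1⟩ := hgen _ hc
  have h2 : b ^ 2 + p ∈ I := by
    rw [← hker, map_add, map_pow, ← h1]; ring
  have h3 : b ^ 2 ∈ I := by
    rw [hI]
    refine ⟨h.sq b, ?_⟩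
    have : -b ^ 2 = p + -(b ^ 2 + p) := by ring
    rw [this]
    exact h.add _ hp _ ((hI _).1 h2).2
  exact hb (Ideal.IsPrime.mem_of_pow_mem ‹_› 2 h3)

theorem preO_point {n : ℕ} (P₀ : Set (MvPolynomial (Fin n) ℝ)) (h₀ : PreO P₀)
    (u v : MvPolynomial (Fin n) ℝ) (hu : u ∈ P₀) (hv : v ∈ P₀) :
    ∃ y : Fin n → ℝ, 0 ≤ eval y u ∧ 0 ≤ eval y v := by
  obtain ⟨P, hP0, h, hmax⟩ := PreO.exists_max P₀ h₀
  have htot := h.total hmax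
  set I := h.supp h htot with hIdef
  have hI : ∀ a, a ∈ I ↔ a ∈ P ∧ -a ∈ P := fun a => Iff.rfl
  have : I.IsPrime := h.supp_prime hmax htot
  let Fr := FractionRing (MvPolynomial (Fin n) ℝ ⧸ I)
  let Cl := AlgebraicClosure Fr
  let φ : MvPolynomial (Fin n) ℝ →+* Cl := (algebraMap Fr Cl).comp
      ((algebraMap (MvPolynomial (Fin n) ℝ ⧸ I) Fr).comp (Ideal.Quotient.mk I))
  obtain ⟨Q, hQ, hφQ⟩ := cone_of_preO h I hI φ rfl
  have : CharZero Cl := charZero_of_injective_ringHom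
    (RingHom.injective (φ.comp (MvPolynomial.C : ℝ →+* MvPolynomial (Fin n) ℝ)))
  obtain ⟨Ω, i1, i2, i3, hivt, j, hj⟩ := rcf_exists Q hQ
  have hrange : ∀ a, φ a ∈ j.range := by
    intro a
    rcases htot a with ha | ha
    · obtain ⟨w, hw, _⟩ := hj _ (hφQ _ ha)
      exact ⟨w, hw⟩
    · obtain ⟨w, hw, _⟩ := hj _ (hφQ _ ha)
      exact ⟨-w, by rw [map_neg, hw, map_neg, neg_neg]⟩
  let e : Ω ≃+* j.range := RingEquiv.ofBijective j.rangeRestrict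
    ⟨fun a b hab => j.injective (congrArg Subtype.val hab), j.rangeRestrict_surjective⟩
  let ψ : MvPolynomial (Fin n) ℝ →+* Ω := e.symm.toRingHom.comp (φ.codRestrict j.range hrange)
  have hψ : ∀ a, j (ψ a) = φ a := by
    intro a
    have : e (ψ a) = φ.codRestrict j.range hrange a := e.apply_symm_apply _
    exact congrArg Subtype.val this
  have hpos : ∀ a ∈ P, 0 ≤ ψ a := by
    intro a ha
    obtain ⟨w, hw, hw0⟩ := hj _ (hφQ _ ha)
    have : ψ a = w := j.injective (by rw [hψ, hw])
    rwa [this]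
  have hev : ∀ p, eval₂ (ψ.comp MvPolynomial.C) (fun k => ψ (X k)) p = ψ p := by
    intro p
    have : eval₂Hom (ψ.comp MvPolynomial.C) (fun k => ψ (X k)) = ψ := by
      apply MvPolynomial.ringHom_ext <;> simp
    exact congrArg (fun f => f p) this
  exact real_transfer hivt u v (ψ.comp MvPolynomial.C) (fun k => ψ (X k))
    (by rw [hev]; exact hpos _ (hP0 hu)) (by rw [hev]; exact hpos _ (hP0 hv))

/-- The preordering generated by `u`. -/
def TT {n : ℕ} (u : MvPolynomial (Fin n) ℝ) : Set (MvPolynomial (Fin n) ℝ) :=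
  {x | ∃ s t, IsSumSq s ∧ IsSumSq t ∧ x = s + u * t}

/-- Closure properties of preorderings. -/
structure Pre {A : Type} [CommRing A] (P : Set A) : Prop where
  add : ∀ a ∈ P, ∀ b ∈ P, a + b ∈ P
  mul : ∀ a ∈ P, ∀ b ∈ P, a * b ∈ P
  sq : ∀ a, a ^ 2 ∈ P

theorem Pre.one {P : Set A} (h : Pre P) : (1 : A) ∈ P := by simpa using h.sq 1
theorem Pre.zero {P : Set A} (h : Pre P) : (0 : A) ∈ P := by simpa using h.sq 0

theorem Pre.adj {P : Set A} (h : Pre P) (a : A) : Pre {x | ∃ s ∈ P, ∃ t ∈ P, x = s + a * t} := by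
    refine ⟨?_, ?_, fun b => ⟨b ^ 2, h.sq b, 0, h.zero, by ring⟩⟩
    · rintro _ ⟨s, hs, t, ht, rfl⟩ _ ⟨s', hs', t', ht', rfl⟩
      exact ⟨s + s', h.add _ hs _ hs', t + t', h.add _ ht _ ht', by ring⟩
    · rintro _ ⟨s, hs, t, ht, rfl⟩ _ ⟨s', hs', t', ht', rfl⟩
      exact ⟨s * s' + a ^ 2 * (t * t'), h.add _ (h.mul _ hs _ hs') _
        (h.mul _ (h.sq a) _ (h.mul _ ht _ ht')), s * t' + t * s',
        h.add _ (h.mul _ hs _ ht') _ (h.mul _ ht _ hs'), by ring⟩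

theorem TT_pre {n : ℕ} (u : MvPolynomial (Fin n) ℝ) : Pre (TT u) := by
  have h0 : Pre {x : MvPolynomial (Fin n) ℝ | IsSumSq x} :=
    ⟨fun a ha b hb => IsSumSq.add ha hb, fun a ha b hb => IsSumSq.mul ha hb,
      fun a => by rw [sq]; exact IsSumSq.mul_self a⟩
  have := h0.adj u
  convert this using 1
  ext x
  constructor
  · rintro ⟨s, t, hs, ht, rfl⟩; exact ⟨s, hs, t, ht, rfl⟩
  · rintro ⟨s, hs, t, ht, rfl⟩; exact ⟨s, t, hs, ht, rfl⟩

theorem TT_u {n : ℕ} (u : MvPolynomial (Fin n) ℝ) : u ∈ TT u :=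
  ⟨0, 1, .zero, by simpa using IsSumSq.mul_self (1 : MvPolynomial (Fin n) ℝ), by ring⟩

theorem psatz {n : ℕ} (u f : MvPolynomial (Fin n) ℝ)
    (hf : ∀ y : Fin n → ℝ, 0 ≤ eval y u → 0 < eval y f) :
    ∃ s ∈ TT u, ∃ t ∈ TT u, f * t = 1 + s := by
  have hT := TT_pre u
  have hQ := hT.adj (-f)
  by_cases hneg : (-1 : MvPolynomial (Fin n) ℝ) ∈ {x | ∃ s ∈ TT u, ∃ t ∈ TT u, x = s + -f * t}
  · obtain ⟨s, hs, t, ht, h1⟩ := hneg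
    exact ⟨s, hs, t, ht, by linear_combination h1⟩
  · obtain ⟨y, h1, h2⟩ := preO_point _ ⟨hQ.add, hQ.mul, hQ.sq, hneg⟩ u (-f)
      ⟨u, TT_u u, 0, hT.zero, by ring⟩ ⟨0, hT.zero, 1, hT.one, by ring⟩
    have := hf y h1
    simp at h2
    linarith

end PS

section Arch
variable {n : ℕ}

theorem Pre.const {P : Set (MvPolynomial (Fin n) ℝ)} (h : Pre P) (c : ℝ) (hc : 0 ≤ c) :
    (C c : MvPolynomial (Fin n) ℝ) ∈ P := by
  have := h.sq (C (Real.sqrt c))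
  rwa [← C_pow, Real.sq_sqrt hc] at this

theorem Pre.bdd {P : Set (MvPolynomial (Fin n) ℝ)} (h : Pre P) (N : ℝ)
    (hN : C N - ∑ i, (X i : MvPolynomial (Fin n) ℝ) ^ 2 ∈ P) (a : MvPolynomial (Fin n) ℝ) :
    ∃ m : ℝ, C m - a ∈ P ∧ C m + a ∈ P := by
  have hhalf : (C (1 / 2 : ℝ) : MvPolynomial (Fin n) ℝ) ∈ P := h.const _ (by norm_num)
  have hC2 : (C (1 / 2 : ℝ) : MvPolynomial (Fin n) ℝ) * 2 = 1 := by
    have : (2 : MvPolynomial (Fin n) ℝ) = C 2 := (map_ofNat C 2).symm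
    rw [this, ← C_mul]; norm_num
  have hmul : ∀ a b : MvPolynomial (Fin n) ℝ, (∃ m : ℝ, C m - a ∈ P ∧ C m + a ∈ P) →
      (∃ m : ℝ, C m - b ∈ P ∧ C m + b ∈ P) → ∃ m : ℝ, C m - a * b ∈ P ∧ C m + a * b ∈ P := by
    rintro a b ⟨m, h1, h2⟩ ⟨k, h3, h4⟩
    refine ⟨m * k, ?_, ?_⟩
    · have := h.mul _ hhalf _ (h.add _ (h.mul _ h1 _ h4) _ (h.mul _ h2 _ h3))
      convert this using 1
      rw [C_mul]
      linear_combination (-(C m * C k - a * b)) * hC2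
    · have := h.mul _ hhalf _ (h.add _ (h.mul _ h1 _ h3) _ (h.mul _ h2 _ h4))
      convert this using 1
      rw [C_mul]
      linear_combination (-(C m * C k + a * b)) * hC2
  have hX : ∀ i, ∃ m : ℝ, C m - (X i : MvPolynomial (Fin n) ℝ) ∈ P ∧ C m + X i ∈ P := by
    intro i
    have h1 : C N - (X i : MvPolynomial (Fin n) ℝ) ^ 2 ∈ P := by
      have hs : ∑ k ∈ Finset.univ.erase i, (X k : MvPolynomial (Fin n) ℝ) ^ 2 ∈ P :=
        Finset.sum_induction _ (· ∈ P) (fun a b ha hb => h.add a ha b hb) h.zero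
          (fun k _ => h.sq _)
      have := h.add _ hN _ hs
      rw [← Finset.add_sum_erase _ _ (Finset.mem_univ i)] at this
      convert this using 1
      ring
    have hq : (C (1 / 4 : ℝ) : MvPolynomial (Fin n) ℝ) = C (1 / 2) ^ 2 := by
      rw [← C_pow]; norm_num
    refine ⟨N + 1 / 4, ?_, ?_⟩
    · convert h.add _ h1 _ (h.sq (X i - C (1 / 2))) using 1
      rw [C_add, hq]
      linear_combination X i * hC2
    · convert h.add _ h1 _ (h.sq (X i + C (1 / 2))) using 1
      rw [C_add, hq]
      linear_combination (-X i) * hC2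
  induction a using MvPolynomial.induction_on with
  | C c =>
    refine ⟨|c|, ?_, ?_⟩
    · rw [← C_sub]; exact h.const _ (by linarith [le_abs_self c])
    · rw [← C_add]; exact h.const _ (by linarith [neg_abs_le c])
  | add p q hp hq =>
    obtain ⟨m, h1, h2⟩ := hp
    obtain ⟨k, h3, h4⟩ := hq
    refine ⟨m + k, ?_, ?_⟩
    · convert h.add _ h1 _ h3 using 1; rw [C_add]; ring
    · convert h.add _ h2 _ h4 using 1; rw [C_add]; ring
  | mul_X p i hp => exact hmul _ _ hp (hX i)

theorem TT_arch (u : MvPolynomial (Fin n) ℝ) (hS : IsCompact {x : Fin n → ℝ | 0 ≤ eval x u}) :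
    ∃ N : ℝ, C N - ∑ i, (X i : MvPolynomial (Fin n) ℝ) ^ 2 ∈ TT u := by
  have hT := TT_pre u
  obtain ⟨N₀, hN₀⟩ := (hS.image (f := fun x => eval x (∑ i, (X i : MvPolynomial (Fin n) ℝ) ^ 2))
    (MvPolynomial.continuous_eval _)).bddAbove
  set ρ := ∑ i, (X i : MvPolynomial (Fin n) ℝ) ^ 2 with hρ
  have hρT : ρ ∈ TT u := Finset.sum_induction _ (· ∈ TT u) (fun a b ha hb => hT.add a ha b hb)
    hT.zero (fun k _ => hT.sq _)
  set N : ℝ := max N₀ 0 + 1 with hNdef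
  have hN0 : 0 ≤ N := by positivity
  obtain ⟨s, hs, t, ht, hst⟩ := psatz u (C N - ρ) (by
    intro y hy
    have := hN₀ ⟨y, hy, rfl⟩
    simp only at this
    rw [map_sub, eval_C]
    linarith [le_max_left N₀ 0])
  set f := C N - ρ with hf
  have hfs : f * (1 + s) ∈ TT u := by
    rw [← hst, ← mul_assoc, ← sq]; exact hT.mul _ (hT.sq f) _ ht
  have h2 : f + C N * s ∈ TT u := by
    have : f + C N * s = f * (1 + s) + s * ρ := by rw [hf]; ring
    rw [this]; exact hT.add _ hfs _ (hT.mul _ hs _ hρT)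
  have hT1 := hT.adj f
  obtain ⟨m, hm, -⟩ := hT1.bdd N ⟨0, hT.zero, 1, hT.one, by ring⟩ s
  obtain ⟨a, ha, b, hb, hab⟩ := hm
  have h3 : (C m - s) * (1 + s) ∈ TT u := by
    rw [hab]
    have : (a + f * b) * (1 + s) = a * (1 + s) + (f * (1 + s)) * b := by ring
    rw [this]
    exact hT.add _ (hT.mul _ ha _ (hT.add _ hT.one _ hs)) _ (hT.mul _ hfs _ hb)
  have h4 : C (m + m ^ 2 / 4) - s ∈ TT u := by
    have e := hT.add _ h3 _ (hT.sq (C (m / 2) - s))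
    convert e using 1
    have e1 : (C m : MvPolynomial (Fin n) ℝ) = C (m / 2) * 2 := by
      have : (2 : MvPolynomial (Fin n) ℝ) = C 2 := (map_ofNat C 2).symm
      rw [this, ← C_mul]; norm_num
    have e2 : (C (m ^ 2 / 4) : MvPolynomial (Fin n) ℝ) = C (m / 2) ^ 2 := by
      rw [← C_pow]; ring_nf
    rw [C_add, e2, e1]
    ring
  refine ⟨N * (m + m ^ 2 / 4) + N, ?_⟩
  have e := hT.add _ (hT.mul _ (hT.const N hN0) _ h4) _ h2
  convert e using 1
  rw [hf, C_add, C_mul]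
  ring

theorem schmudgen (u : MvPolynomial (Fin n) ℝ) (hS : IsCompact {x : Fin n → ℝ | 0 ≤ eval x u})
    (f : MvPolynomial (Fin n) ℝ) (hf : ∀ y : Fin n → ℝ, 0 ≤ eval y u → 0 < eval y f) :
    f ∈ TT u := by
  have hT := TT_pre u
  obtain ⟨N, hN⟩ := TT_arch u hS
  obtain ⟨s, hs, t, ht, hst⟩ := psatz u f hf
  obtain ⟨k₀, hk₀, -⟩ := hT.bdd N hN t
  obtain ⟨r₀, -, hr₀⟩ := hT.bdd N hN f
  set k : ℝ := max k₀ 0 + 1 with hkdef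
  have hkpos : 0 < k := by positivity
  have hk : C k - t ∈ TT u := by
    have := hT.add _ hk₀ _ (hT.const (k - k₀) (by linarith [le_max_left k₀ 0]))
    convert this using 1
    rw [C_sub]; ring
  have step : ∀ r : ℝ, 0 ≤ r → C r + f ∈ TT u → C (r - 1 / k) + f ∈ TT u := by
    intro r hr h1
    have e := hT.mul _ (hT.const (1 / k) (by positivity)) _ (hT.add _ (hT.mul _ hk _ h1) _
      (hT.add _ hs _ (hT.mul _ ht _ (hT.const r hr))))
    convert e using 1
    have e1 : (C (1 / k) : MvPolynomial (Fin n) ℝ) * C k = 1 := by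
      rw [← C_mul, one_div_mul_cancel hkpos.ne', C_1]
    rw [C_sub]
    linear_combination (-(C r + f)) * e1 + C (1 / k) * hst
  have main : ∀ q : ℕ, ∀ r : ℝ, r ≤ q * (1 / k) → C r + f ∈ TT u → f ∈ TT u := by
    intro q
    induction q with
    | zero =>
      intro r hr h1
      simp only [Nat.cast_zero, zero_mul] at hr
      have := hT.add _ h1 _ (hT.const (-r) (by linarith))
      convert this using 1
      rw [C_neg]; ring
    | succ q ih =>
      intro r hr h1
      by_cases h0 : 0 ≤ r
      · refine ih (r - 1 / k) ?_ (step r h0 h1)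
        push_cast at hr
        linarith
      · exact ih r (le_trans (not_le.1 h0).le (by positivity)) h1
  obtain ⟨q, hq⟩ := exists_nat_ge (r₀ * k)
  refine main q r₀ ?_ hr₀
  rw [mul_one_div, le_div_iff₀ hkpos]
  exact hq

end Arch

section Meas
variable {n : ℕ}

/-- Restriction of polynomials to a set. -/
noncomputable def resS (S : Set (Fin n → ℝ)) : MvPolynomial (Fin n) ℝ →ₐ[ℝ] C(S, ℝ) :=
  aeval (fun i => (⟨fun x => x.1 i, (continuous_apply i).comp continuous_subtype_val⟩ : C(S, ℝ)))

theorem resS_apply (S : Set (Fin n → ℝ)) (p : MvPolynomial (Fin n) ℝ) (x : S) :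
    resS S p x = eval x.1 p := by
  induction p using MvPolynomial.induction_on with
  | C c => simp [resS]
  | add p q hp hq => rw [map_add, map_add, ContinuousMap.add_apply, hp, hq]
  | mul_X p i hp =>
    rw [map_mul, map_mul, ContinuousMap.mul_apply, hp]
    simp [resS]

theorem resS_dense (S : Set (Fin n → ℝ)) [CompactSpace S] : DenseRange (resS S) := by
  have h := ContinuousMap.subalgebra_topologicalClosure_eq_top_of_separatesPoints
    (resS S).range (by
      intro x y hxy
      have : ∃ i, x.1 i ≠ y.1 i := by
        by_contra hc
        push Not at hc
        exact hxy (Subtype.ext (funext hc))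
      obtain ⟨i, hi⟩ := this
      refine ⟨_, ⟨resS S (X i), ⟨X i, rfl⟩, rfl⟩, ?_⟩
      simpa [resS_apply] using hi)
  rw [denseRange_iff_closure_range]
  have h2 := congrArg (fun A : Subalgebra ℝ C(S, ℝ) => (A : Set C(S, ℝ))) h
  simpa using h2

theorem exists_ext (S : Set (Fin n → ℝ)) [CompactSpace S] (L : MvPolynomial (Fin n) ℝ →ₗ[ℝ] ℝ)
    (hL : ∀ f : MvPolynomial (Fin n) ℝ, (∀ y ∈ S, 0 ≤ eval y f) → 0 ≤ L f) :
    ∃ G : C(S, ℝ) →ₗ[ℝ] ℝ, (∀ p, G (resS S p) = L p) ∧ ∀ φ, 0 ≤ φ → 0 ≤ G φ := by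
  let R : MvPolynomial (Fin n) ℝ →ₗ[ℝ] C(S, ℝ) := (resS S).toLinearMap
  have hR : ∀ p x, R p x = eval x.1 p := fun p x => resS_apply S p x
  have hker : LinearMap.ker R ≤ LinearMap.ker L := by
    intro p hp
    rw [LinearMap.mem_ker] at *
    have h0 : ∀ y ∈ S, eval y p = 0 := by
      intro y hy
      rw [← hR p ⟨y, hy⟩, hp]; rfl
    have h1 := hL p (fun y hy => (h0 y hy).ge)
    have h2 := hL (-p) (fun y hy => by rw [map_neg, h0 y hy, neg_zero])
    rw [map_neg] at h2
    linarith
  let F : C(S, ℝ) →ₗ.[ℝ] ℝ := ⟨LinearMap.range R,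
    ((LinearMap.ker R).liftQ L hker).comp R.quotKerEquivRange.symm.toLinearMap⟩
  have hF : ∀ p, F ⟨R p, ⟨p, rfl⟩⟩ = L p := by
    intro p
    show (LinearMap.ker R).liftQ L hker (R.quotKerEquivRange.symm ⟨R p, ⟨p, rfl⟩⟩) = L p
    have : R.quotKerEquivRange.symm ⟨R p, ⟨p, rfl⟩⟩ = Submodule.Quotient.mk p := by
      rw [LinearEquiv.symm_apply_eq]; rfl
    rw [this]; rfl
  obtain ⟨G, h1, h2⟩ := riesz_extension (PointedCone.positive ℝ C(S, ℝ)) F (by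
    rintro ⟨_, ⟨p, rfl⟩⟩ hx
    rw [hF]
    rw [PointedCone.mem_positive] at hx
    apply hL
    intro y hy
    have h3 : (0 : ℝ) ≤ R p ⟨y, hy⟩ := hx ⟨y, hy⟩
    rwa [hR] at h3) (by
    intro y
    refine ⟨⟨R (MvPolynomial.C ‖y‖), ⟨_, rfl⟩⟩, ?_⟩
    rw [PointedCone.mem_positive]
    intro x
    have := y.norm_coe_le_norm x
    show (0 : ℝ) ≤ R (MvPolynomial.C ‖y‖) x + y x
    rw [hR, eval_C]
    rw [Real.norm_eq_abs] at this
    linarith [neg_abs_le (y x)])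
  refine ⟨G, fun p => ?_, fun φ hφ => h2 _ (by rwa [PointedCone.mem_positive])⟩
  rw [← hF]
  exact h1 ⟨R p, ⟨p, rfl⟩⟩

theorem exists_meas (S : Set (Fin n → ℝ)) [CompactSpace S] (G : C(S, ℝ) →ₗ[ℝ] ℝ)
    (hG : ∀ φ, 0 ≤ φ → 0 ≤ G φ) :
    ∃ ν : Measure S, IsFiniteMeasure ν ∧ ∀ φ : C(S, ℝ), ∫ x, φ x ∂ν = G φ := by
  let Λ₀ : CompactlySupportedContinuousMap S ℝ →ₗ[ℝ] ℝ :=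
    { toFun := fun φ => G φ.toContinuousMap
      map_add' := fun a b => by rw [← map_add]; rfl
      map_smul' := fun c a => by rw [RingHom.id_apply, ← map_smul]; rfl }
  let Λ := PositiveLinearMap.mk₀ Λ₀ (fun φ hφ => hG _ (by
    intro x
    exact CompactlySupportedContinuousMap.le_def.1 hφ x))
  refine ⟨RealRMK.rieszMeasure Λ, inferInstance, fun φ => ?_⟩
  exact RealRMK.integral_rieszMeasure Λ (CompactlySupportedContinuousMap.continuousMapEquiv φ)

theorem G_cont (S : Set (Fin n → ℝ)) [CompactSpace S] (G : C(S, ℝ) →ₗ[ℝ] ℝ)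
    (hG : ∀ φ, 0 ≤ φ → 0 ≤ G φ) : Continuous G := by
  have hb : ∀ φ : C(S, ℝ), G φ ≤ G 1 * ‖φ‖ := by
    intro φ
    have h := hG (‖φ‖ • (1 : C(S, ℝ)) - φ) (by
      intro x
      have := φ.norm_coe_le_norm x
      rw [Real.norm_eq_abs] at this
      show (0 : ℝ) ≤ ‖φ‖ * 1 - φ x
      linarith [le_abs_self (φ x)])
    rw [map_sub, map_smul, smul_eq_mul] at h
    linarith
  refine AddMonoidHomClass.continuous_of_bound G (G 1) (fun φ => ?_)
  rw [Real.norm_eq_abs, abs_le]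
  have h1 := hb φ
  have h2 := hb (-φ)
  rw [map_neg, norm_neg] at h2
  constructor <;> linarith

theorem meas_supp (S : Set (Fin n → ℝ)) [CompactSpace S] (L : MvPolynomial (Fin n) ℝ →ₗ[ℝ] ℝ)
    (G : C(S, ℝ) →ₗ[ℝ] ℝ) (hGL : ∀ p, G (resS S p) = L p)
    (hG : ∀ φ, 0 ≤ φ → 0 ≤ G φ) (ν : Measure S) [IsFiniteMeasure ν]
    (hν : ∀ φ : C(S, ℝ), ∫ x, φ x ∂ν = G φ) (g : MvPolynomial (Fin n) ℝ)
    (hg : ∀ p : MvPolynomial (Fin n) ℝ, 0 ≤ L (g * p ^ 2)) :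
    ∀ᵐ x ∂ν, 0 ≤ eval x.1 g := by
  have hall : ∀ φ : C(S, ℝ), 0 ≤ G (resS S g * φ ^ 2) := by
    intro φ
    refine (resS_dense S).induction_on (p := fun φ => 0 ≤ G (resS S g * φ ^ 2)) φ ?_ ?_
    · have hc := G_cont S G hG
      exact isClosed_le continuous_const (hc.comp (by fun_prop))
    · intro p
      rw [← map_pow, ← map_mul, hGL]
      exact hg p
  let w : C(S, ℝ) := ⟨fun x => max (-(resS S g x)) 0, by fun_prop⟩
  let φ : C(S, ℝ) := ⟨fun x => Real.sqrt (max (-(resS S g x)) 0), by fun_prop⟩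
  have hw : resS S g * φ ^ 2 = -(w ^ 2) := by
    ext x
    simp only [ContinuousMap.mul_apply, ContinuousMap.pow_apply, ContinuousMap.neg_apply]
    show resS S g x * Real.sqrt (max (-(resS S g x)) 0) ^ 2 = -(max (-(resS S g x)) 0) ^ 2
    rw [Real.sq_sqrt (le_max_right _ _)]
    rcases le_total (-(resS S g x)) 0 with h | h
    · rw [max_eq_right h]; ring
    · rw [max_eq_left h]; ring
  have h1 := hall φ
  rw [hw, map_neg, ← hν] at h1
  have h2 : ∫ x, (w ^ 2) x ∂ν = 0 := by
    apply le_antisymm (by linarith)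
    exact integral_nonneg (fun x => by rw [ContinuousMap.pow_apply]; exact sq_nonneg _)
  rw [integral_eq_zero_iff_of_nonneg
    (fun x => by rw [ContinuousMap.pow_apply]; exact sq_nonneg _)
    ((map_continuous (w ^ 2)).integrable_of_hasCompactSupport
      (HasCompactSupport.of_compactSpace _))] at h2
  filter_upwards [h2] with x hx
  rw [ContinuousMap.pow_apply] at hx
  have h3 : w x = 0 := by simpa using hx
  have h4 : max (-(resS S g x)) 0 = 0 := h3
  rw [← resS_apply S g x]
  have := le_max_left (-(resS S g x)) 0
  linarith

end Meas

theorem stmt_14 {n l : ℕ} (g : Fin l → MvPolynomial (Fin n) ℝ)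
    (K : Set (Fin n → ℝ)) (hKdef : K = {x : Fin n → ℝ | ∀ j, 0 ≤ eval x (g j)})
    (hPut : PutinarProperty g)
    (L : MvPolynomial (Fin n) ℝ →ₗ[ℝ] ℝ)
    (hL0 : ∀ p : MvPolynomial (Fin n) ℝ, 0 ≤ L (p ^ 2))
    (hLg : ∀ j, ∀ p : MvPolynomial (Fin n) ℝ, 0 ≤ L (g j * p ^ 2)) :
    ∃ μ : Measure (Fin n → ℝ), IsFiniteMeasure μ ∧ measureSupport μ ⊆ K ∧
      ∀ f : MvPolynomial (Fin n) ℝ, L f = ∫ x, eval x f ∂μ := by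
  obtain ⟨σ₀, σ, hσ₀, hσ, hcpt⟩ := hPut
  set u := σ₀ + ∑ j, σ j * g j with hu
  have hs0 : ∀ s, IsSumSq s → 0 ≤ L s := by
    intro s hs
    induction hs with
    | zero => simp
    | sq_add a _ ih =>
      rw [map_add]
      have := hL0 a
      rw [sq] at this
      linarith
  have hsg : ∀ j s, IsSumSq s → 0 ≤ L (g j * s) := by
    intro j s hs
    induction hs with
    | zero => simp
    | sq_add a _ ih =>
      rw [mul_add, map_add]
      have := hLg j a
      rw [sq] at this
      linarith
  have hT : ∀ f ∈ TT u, 0 ≤ L f := by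
    rintro _ ⟨s, t, hs, ht, rfl⟩
    rw [map_add, hu, add_mul, map_add, Finset.sum_mul, map_sum]
    have h1 := hs0 s hs
    have h2 := hs0 _ (hσ₀.mul ht)
    have h3 : 0 ≤ ∑ j, L (σ j * g j * t) := Finset.sum_nonneg (fun j _ => by
      have := hsg j _ ((hσ j).mul ht)
      have e : σ j * g j * t = g j * (σ j * t) := by ring
      rwa [e])
    linarith
  set S := {x : Fin n → ℝ | 0 ≤ eval x u} with hS
  have hLS : ∀ f : MvPolynomial (Fin n) ℝ, (∀ y ∈ S, 0 ≤ eval y f) → 0 ≤ L f := by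
    intro f hf
    have h1 : ∀ ε : ℝ, 0 < ε → 0 ≤ L f + ε * L 1 := by
      intro ε hε
      have := hT _ (schmudgen u hcpt (f + C ε) (fun y hy => by
        rw [map_add, eval_C]; linarith [hf y hy]))
      rw [map_add] at this
      have e : (C ε : MvPolynomial (Fin n) ℝ) = ε • 1 := by
        rw [MvPolynomial.smul_eq_C_mul, mul_one]
      rwa [e, map_smul, smul_eq_mul] at this
    by_contra hc
    push Not at hc
    have hL1 : 0 ≤ L 1 := by simpa using hL0 1
    have hpos : 0 < L 1 + 1 := by linarith
    have h2 := h1 (-(L f) / (L 1 + 1)) (div_pos (by linarith) hpos)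
    have h3 : -(L f) / (L 1 + 1) * L 1 = -(L f) - (-(L f) / (L 1 + 1)) := by
      field_simp; ring
    have h4 : 0 < -(L f) / (L 1 + 1) := div_pos (by linarith) hpos
    linarith
  have : CompactSpace S := isCompact_iff_compactSpace.1 hcpt
  obtain ⟨G, hGL, hG⟩ := exists_ext S L hLS
  obtain ⟨ν, hνf, hν⟩ := exists_meas S G hG
  have hme : MeasurableEmbedding (Subtype.val : S → (Fin n → ℝ)) :=
    MeasurableEmbedding.subtype_coe hcpt.measurableSet
  have hKc : IsClosed K := by
    rw [hKdef, Set.ofPred_forall]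
    exact isClosed_iInter (fun j => isClosed_le continuous_const (MvPolynomial.continuous_eval _))
  refine ⟨ν.map Subtype.val, inferInstance, ?_, ?_⟩
  · apply Set.sInter_subset_of_mem
    refine ⟨hKc, ?_⟩
    rw [hme.map_apply]
    have h1 : ∀ᵐ x ∂ν, ∀ j, 0 ≤ eval x.1 (g j) :=
      ae_all_iff.2 (fun j => meas_supp S L G hGL hG ν hν (g j) (hLg j))
    rw [ae_iff] at h1
    rw [hKdef]
    exact h1
  · intro f
    rw [hme.integral_map, ← hGL, ← hν]
    simp only [resS_apply]
end

section
/- For each d ∈ ℕ let V_d = inf { ∫_B P dvol : P is a d-feasible polynomial } (the infimum is over a nonempty set since the constant polynomial 1 is d-feasible). Then lim_{d→∞} V_d = vol(K). -/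
open MeasureTheory MvPolynomial Filter

/-- A real polynomial `P` in `n` variables is `d`-feasible (w.r.t. `B`, `K`) if its total
degree is at most `d`, `P ≥ 0` on `B` and `P ≥ 1` on `K`. -/
def Feasible {n : ℕ} (B K : Set (Fin n → ℝ)) (d : ℕ) (P : MvPolynomial (Fin n) ℝ) : Prop :=
  P.totalDegree ≤ d ∧ (∀ x ∈ B, 0 ≤ eval x P) ∧ (∀ x ∈ K, 1 ≤ eval x P)

lemma exists_poly_near {n : ℕ} (B : Set (Fin n → ℝ)) (hB : IsCompact B)
    (f : C(Fin n → ℝ, ℝ)) {ε : ℝ} (hε : 0 < ε) :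
    ∃ P : MvPolynomial (Fin n) ℝ, ∀ x ∈ B, |eval x P - f x| < ε := by
  let c : Fin n → C(Fin n → ℝ, ℝ) := fun i => ⟨fun x => x i, continuous_apply i⟩
  let φ : MvPolynomial (Fin n) ℝ →ₐ[ℝ] C(Fin n → ℝ, ℝ) := aeval c
  have hφ : ∀ P x, φ P x = eval x P := by
    intro P x
    induction P using MvPolynomial.induction_on with
    | C a => simp [φ]
    | add p q hp hq => simp [hp, hq]
    | mul_X p i hp => simp [hp]; left; simp [φ, c]
  have hs : φ.range.SeparatesPoints := by
    intro x y hxy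
    obtain ⟨i, hi⟩ := Function.ne_iff.mp hxy
    refine ⟨_, ⟨φ (X i), ⟨X i, rfl⟩, rfl⟩, ?_⟩
    simpa [hφ] using hi
  obtain ⟨g, ⟨P, rfl⟩, hP⟩ :=
    ContinuousMap.exists_mem_subalgebra_near_continuous_of_isCompact_of_separatesPoints hs f hB hε
  refine ⟨P, fun x hx => ?_⟩
  have := hP x hx
  rw [← hφ]
  exact this

theorem stmt_15 {n : ℕ} (B K : Set (Fin n → ℝ)) (hB : IsCompact B) (hK : IsClosed K)
    (hKB : K ⊆ B)
    (V : ℕ → ℝ)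
    (hV : ∀ d, V d = sInf {v : ℝ | ∃ P : MvPolynomial (Fin n) ℝ,
      Feasible B K d P ∧ v = ∫ x in B, eval x P}) :
    Tendsto V atTop (nhds (volume (K ∩ B)).toReal) := by
  have hBm : MeasurableSet B := hB.isClosed.measurableSet
  have hKm : MeasurableSet K := hK.measurableSet
  have hint : ∀ P : MvPolynomial (Fin n) ℝ, IntegrableOn (fun x => eval x P) B volume :=
    fun P => (MvPolynomial.continuous_eval P).continuousOn.integrableOn_compact hB
  have hKfin : volume K ≠ ⊤ := ((measure_mono hKB).trans_lt hB.measure_lt_top).ne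
  rw [Set.inter_eq_left.mpr hKB]
  have hlow : ∀ d, ∀ P, Feasible B K d P → (volume K).toReal ≤ ∫ x in B, eval x P := by
    intro d P hP
    calc (volume K).toReal = ∫ x in K, (1:ℝ) := by simp [Measure.real]
      _ ≤ ∫ x in K, eval x P :=
        setIntegral_mono_on (integrableOn_const hKfin) ((hint P).mono_set hKB) hKm hP.2.2
      _ ≤ ∫ x in B, eval x P := by
        apply setIntegral_mono_set (hint P)
        · exact (ae_restrict_iff' hBm).mpr (ae_of_all _ hP.2.1)
        · exact hKB.eventuallyLE
  rw [Metric.tendsto_atTop]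
  intro ε hε
  have : IsFiniteMeasure (volume.restrict B) := ⟨by simpa using hB.measure_lt_top⟩
  have hlim := tendsto_integral_thickenedIndicator_of_isClosed (volume.restrict B) hK
    (δs := fun k : ℕ => 1 / ((k : ℝ) + 1)) (fun k => by positivity)
    tendsto_one_div_add_atTop_nhds_zero_nat
  have hKr : (volume.restrict B).real K = (volume K).toReal := by
    simp [Measure.real, Measure.restrict_apply hKm, Set.inter_eq_left.mpr hKB]
  rw [hKr] at hlim
  obtain ⟨k, hk⟩ := (hlim.eventually_lt_const
    (show (volume K).toReal < (volume K).toReal + ε / 2 by linarith)).exists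
  have hδ : (0:ℝ) < 1 / ((k : ℝ) + 1) := by positivity
  set g := thickenedIndicator hδ K with hg
  have hgint : Integrable (fun x => (g x : ℝ)) (volume.restrict B) :=
    integrable_thickenedIndicator K hδ
  set m := (volume.restrict B).real Set.univ with hm
  have hm0 : 0 ≤ m := measureReal_nonneg
  set η := ε / (4 * (m + 1)) with hη
  have hη0 : 0 < η := by positivity
  obtain ⟨P, hP⟩ := exists_poly_near B hB
    ⟨fun x => (g x : ℝ) + η, by fun_prop⟩ hη0
  simp only [ContinuousMap.coe_mk, abs_lt] at hP
  have hfeas : ∀ d, P.totalDegree ≤ d → Feasible B K d P := by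
    intro d hd
    refine ⟨hd, fun x hx => ?_, fun x hx => ?_⟩
    · have := (hP x hx).1
      have h0 : (0:ℝ) ≤ g x := (g x).2
      linarith
    · have := (hP x (hKB hx)).1
      have h1 : (g x : ℝ) = 1 := by
        rw [hg, thickenedIndicator_one hδ K hx]; simp
      linarith
  have hPint : ∫ x in B, eval x P < (volume K).toReal + ε := by
    have h1 : ∫ x in B, eval x P ≤ ∫ x in B, ((g x : ℝ) + 2 * η) := by
      apply setIntegral_mono_on (hint P) (hgint.add (integrable_const _)) hBm
      intro x hx
      have := (hP x hx).2
      show eval x P ≤ (g x : ℝ) + 2 * η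
      linarith
    rw [integral_add hgint (integrable_const _), integral_const, ← hm, smul_eq_mul] at h1
    have h2 : m * (2 * η) ≤ ε / 2 := by
      rw [hη]
      have : m * (2 * (ε / (4 * (m + 1)))) = (ε / 2) * (m / (m + 1)) := by
        field_simp; ring
      rw [this]
      have : m / (m + 1) ≤ 1 := by
        rw [div_le_one (by positivity)]; linarith
      nlinarith
    have hk' : ∫ x in B, (g x : ℝ) < (volume K).toReal + ε / 2 := hk
    linarith
  refine ⟨P.totalDegree, fun d hd => ?_⟩
  have hl : (volume K).toReal ≤ V d := by
    rw [hV]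
    apply le_csInf
    · exact ⟨_, P, hfeas d hd, rfl⟩
    · rintro v ⟨Q, hQ, rfl⟩
      exact hlow d Q hQ
  have hu : V d ≤ ∫ x in B, eval x P := by
    rw [hV]
    apply csInf_le
    · refine ⟨(volume K).toReal, ?_⟩
      rintro v ⟨Q, hQ, rfl⟩
      exact hlow d Q hQ
    · exact ⟨P, hfeas d hd, rfl⟩
  rw [Real.dist_eq, abs_lt]
  constructor <;> linarith
end
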